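/- Let n ≥ 2 be an integer and F_q a finite field of order q such that q ≥ (2n·n!)² and q is coprime to n(n-1). Then there exists b ∈ F_q such that the trinomial Y^n - Y + b is irreducible in F_q[Y] (hence the extension F_{q^n}/F_q is realized by Y^n - Y + b). -/

import Mathlib

/-!
Let `q` be the cardinality of `F` and suppose that every `Y ^ n - Y + b` is reducible. Then all roots,
in an algebraic closure `k`, of all these trinomials have degree at most `n - 1` over `F`. At most
`n - 1` values of `b` give a multiple root, so there are at least `n (q - (n - 1))` noncritical roots
(`exists_roots`). The theorem follows by bounding the number of roots of each degree `r + 1 < n`.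

A root of degree `r + 1` together with its Frobenius conjugates is an `(r + 1)`-tuple of distinct
points on which `Y ^ n - Y` is constant, permuted cyclically by Frobenius. Such tuples are points of an
affine curve, whose coordinate ring has degree `d = (n - 1)! / (n - r - 1)!`, and Stepanov's method
bounds their number by `q + d (n ^ 2 - 1) √q` (`RootData.card_le`, `card_degree_le`). Summing over
`r`, the number of roots is at most `(n - 1) q + 2 (n - 1)! (n ^ 2 - 1) √q`, which is too small.

The curve is studied through its function field, realised in power series. Near a critical point of
`Y ^ n - Y` the trinomial `Y ^ n - Y + t` has `n` roots in `k⟦S⟧`, where `S ^ 2` is a local parameter in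
`t`, and `S ↦ -S` exchanges exactly two of them (`RootData`, `exists_rootData`). The roots other than a
given one are conjugate over the field generated by that one, because
`1 + W + ⋯ + W ^ (n - 1) - s ^ (n - 1)` is irreducible over `k(s)`. Hence the monodromy group is
doubly transitive and contains a transposition, so it is symmetric (`RootData.relPerm_eq_top`), and
the curve of `(r + 1)`-tuples is irreducible. The divided differences of `Y ^ n - Y` reduce every
polynomial on it to standard monomials (`exists_reduced`), which are independent
(`RootData.box_indep`); this gives the Hilbert function and the number of zeros a function of given
degree can have (`zero_count`).

The auxiliary function is `∑ α, y ^ α * u α (z)`, where `z` is the permuted tuple of `q`-th powers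
of the coordinates `y`. Since `y` and `z` agree at the points to be counted, and `Y ^ n - Y` is constant
on both tuples, `y` is a power series in `z` and the single quantity `Δ`, the difference of these constants
(`aux_mem_pow`). Vanishing of order `M` is therefore a system of linear conditions on the coefficients of
the `u α`, solvable nontrivially by a dimension count (`exists_aux`). The function is nonzero since
standard monomials of small degree are independent over `q`-th powers (`RootData.indep_over_pow`).
-/

open Polynomial

/-! ### Roots as power series near a critical point -/

namespace Trinomial
open scoped PowerSeries

/-- Hensel's lemma for power series over a field. -/
theorem hensel_ps {k : Type*} [Field k] (f : k⟦X⟧[X]) (hf : f.Monic) (a₀ : k)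
    (h0 : (f.map PowerSeries.constantCoeff).eval a₀ = 0)
    (h1 : (f.map PowerSeries.constantCoeff).derivative.eval a₀ ≠ 0) :
    ∃ a : k⟦X⟧, f.eval a = 0 ∧ PowerSeries.constantCoeff a = a₀ := by
  have key : ∀ g : k⟦X⟧[X], PowerSeries.constantCoeff (g.eval (PowerSeries.C a₀)) =
      (g.map PowerSeries.constantCoeff).eval a₀ := by
    intro g
    rw [← Polynomial.eval₂_hom, Polynomial.eval_map]; simp
  obtain ⟨a, ha, ha'⟩ := HenselianRing.is_henselian (I := Ideal.span {(PowerSeries.X : k⟦X⟧)})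
    f hf (PowerSeries.C a₀)
    (by rw [Ideal.mem_span_singleton, PowerSeries.X_dvd_iff, key, h0])
    (by
      apply IsUnit.map
      rw [PowerSeries.isUnit_iff_constantCoeff, key, ← Polynomial.derivative_map]
      exact h1.isUnit)
  refine ⟨a, ha, ?_⟩
  rw [Ideal.mem_span_singleton, PowerSeries.X_dvd_iff, map_sub] at ha'
  simpa [sub_eq_zero] using ha'

/-- The only multiple root of `Y ^ n - Y + (η - η ^ n)`, for a critical point `η`, is `η`, and it is
a double root; hence there are (at least) `n - 2` simple roots. -/
theorem exists_simple_roots {k : Type*} [Field k] [IsAlgClosed k] (N : ℕ)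
    (hn : ((N + 2 : ℕ) : k) ≠ 0) (hn1 : ((N + 1 : ℕ) : k) ≠ 0) (η : k)
    (hη : ((N + 2 : ℕ) : k) * η ^ (N + 1) = 1) :
    ∃ ρ : Fin N → k, Function.Injective ρ ∧ ∀ i, ρ i ≠ η ∧
      ρ i ^ (N + 2) - ρ i + (η - η ^ (N + 2)) = 0 ∧
      ((N + 2 : ℕ) : k) * ρ i ^ (N + 1) - 1 ≠ 0 := by
  classical
  set f : k[X] := X ^ (N + 2) + (- X + C (η - η ^ (N + 2))) with hf
  have hdeg : (- X + C (η - η ^ (N + 2)) : k[X]).degree < ((N + 2 : ℕ) : WithBot ℕ) := by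
    refine lt_of_le_of_lt (b := (1 : WithBot ℕ)) (by compute_degree) ?_
    exact_mod_cast (by omega : 1 < N + 2)
  have hmonic : f.Monic := monic_X_pow_add hdeg
  have hf0 : f ≠ 0 := hmonic.ne_zero
  have hnd : f.natDegree = N + 2 := by
    rw [hf, natDegree_add_eq_left_of_degree_lt]
    · simp
    · simpa using hdeg
  have hcard : Multiset.card f.roots = N + 2 := by
    rw [← hnd]; exact (IsAlgClosed.splits f).natDegree_eq_card_roots.symm
  have hder : derivative f = C ((N + 2 : ℕ) : k) * X ^ (N + 1) - 1 := by
    simp only [hf, derivative_add, derivative_X_pow, derivative_neg, derivative_X, derivative_C]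
    push_cast; ring_nf
  have hder2 : derivative (derivative f) = C (((N + 2 : ℕ) : k) * ((N + 1 : ℕ) : k)) * X ^ N := by
    rw [hder]
    simp only [derivative_sub, derivative_C_mul, derivative_X_pow, derivative_one]
    simp [mul_assoc]
  have hη0 : η ≠ 0 := by rintro rfl; simp at hη
  have hroot : ∀ x, f.IsRoot x ↔ x ^ (N + 2) - x + (η - η ^ (N + 2)) = 0 := by
    intro x; simp [hf, IsRoot]; ring_nf
  have hcrit : ∀ x, f.IsRoot x → ((N + 2 : ℕ) : k) * x ^ (N + 1) - 1 = 0 → x = η := by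
    intro x hx h
    rw [hroot] at hx
    have h1 : x ^ (N + 1) = η ^ (N + 1) := by
      apply mul_left_cancel₀ hn; rw [hη]; linear_combination h
    have h2 : (x - η) * (1 - η ^ (N + 1)) = 0 := by
      have : x ^ (N + 2) = x * η ^ (N + 1) := by rw [← h1]; ring
      rw [this] at hx; linear_combination - hx
    rcases mul_eq_zero.1 h2 with h3 | h3
    · exact sub_eq_zero.1 h3
    · exfalso; apply hn1
      have : η ^ (N + 1) = 1 := by linear_combination - h3
      rw [this] at hη; push_cast at hη ⊢; linear_combination hη
  have hc1 : ∀ x, x ≠ η → f.roots.count x ≤ 1 := by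
    intro x hx
    by_contra hlt
    rw [not_le, count_roots, one_lt_rootMultiplicity_iff_isRoot hf0, hder] at hlt
    exact hx (hcrit x hlt.1 (by simpa [IsRoot] using hlt.2))
  have hc2 : f.roots.count η ≤ 2 := by
    by_contra hlt
    rw [not_le, count_roots] at hlt
    have := isRoot_iterate_derivative_of_lt_rootMultiplicity hlt
    simp only [Function.iterate_succ, Function.iterate_zero, Function.comp, id] at this
    rw [hder2] at this
    simp only [IsRoot, eval_mul, eval_C, eval_pow, eval_X] at this
    exact mul_ne_zero (mul_ne_zero hn hn1) (pow_ne_zero _ hη0) this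
  set s := f.roots.toFinset.erase η with hs
  have hcs : N ≤ s.card := by
    have hη_mem : η ∈ f.roots.toFinset := by
      rw [Multiset.mem_toFinset, mem_roots hf0, hroot]; ring
    have h1 := f.roots.toFinset_sum_count_eq
    rw [hcard, ← Finset.add_sum_erase _ _ hη_mem, ← hs] at h1
    have h2 : ∑ x ∈ s, f.roots.count x ≤ ∑ x ∈ s, 1 :=
      Finset.sum_le_sum fun x hx => hc1 x (Finset.ne_of_mem_erase hx)
    simp only [Finset.sum_const, smul_eq_mul, mul_one] at h2
    omega
  obtain ⟨s', hs', hc'⟩ := Finset.exists_subset_card_eq hcs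
  let e := s'.equivFinOfCardEq hc'
  refine ⟨fun i => (e.symm i : k), Subtype.val_injective.comp e.symm.injective, fun i => ?_⟩
  have hm : (e.symm i : k) ∈ s := hs' (e.symm i).2
  have h1 := Finset.ne_of_mem_erase hm
  have h2 := Finset.mem_of_mem_erase hm
  rw [Multiset.mem_toFinset, mem_roots hf0] at h2
  exact ⟨h1, (hroot _).1 h2, fun h => h1 (hcrit _ h2 h)⟩

/-- The branch of the curve `Y ^ n - Y + t = 0` through the critical point `η`, where
`t = η - η ^ n + S ^ 2`; it is found as `η + S / V` where `V` solves a monic equation with a simple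
residual root. -/
theorem exists_double_branch {k : Type*} [Field k] [IsAlgClosed k] (N : ℕ) (hN : 1 ≤ N)
    (hn : ((N + 2 : ℕ) : k) ≠ 0) (hn1 : ((N + 1 : ℕ) : k) ≠ 0) (h2 : (2 : k) ≠ 0) (η : k)
    (hη : ((N + 2 : ℕ) : k) * η ^ (N + 1) = 1) :
    ∃ y : k⟦X⟧, y ^ (N + 2) - y + (PowerSeries.C (η - η ^ (N + 2)) + PowerSeries.X ^ 2) = 0 ∧
      PowerSeries.constantCoeff y = η ∧ PowerSeries.coeff 1 y ≠ 0 := by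
  have hη0 : η ≠ 0 := by rintro rfl; simp at hη
  -- `c j` is the coefficient of `V ^ (N - j)`
  let c : ℕ → k⟦X⟧ := fun j =>
    PowerSeries.C (((N + 2).choose (j + 2) : k) * η ^ (N - j)) * PowerSeries.X ^ j
  let g : k⟦X⟧[X] := X ^ (N + 2) + ∑ j ∈ Finset.range (N + 1), C (c j) * X ^ (N - j)
  have hg : g.Monic := by
    apply monic_X_pow_add
    refine lt_of_le_of_lt (degree_sum_le _ _) ?_
    rw [Finset.sup_lt_iff (by exact WithBot.bot_lt_coe _)]
    intro j hj
    refine lt_of_le_of_lt (degree_C_mul_X_pow_le _ _) ?_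
    exact_mod_cast (by omega : N - j < N + 2)
  set κ : k := ((N + 2).choose 2 : k) * η ^ N with hκ
  have hκ0 : κ ≠ 0 := by
    apply mul_ne_zero _ (pow_ne_zero _ hη0)
    intro h
    have : (((N + 2).choose 2 * 2 : ℕ) : k) = ((N + 2 : ℕ) : k) * ((N + 1 : ℕ) : k) := by
      rw [← Nat.cast_mul]; congr 1
      have := Nat.add_one_mul_choose_eq (N + 1) 1
      simpa using this.symm
    rw [Nat.cast_mul, h, zero_mul] at this
    exact mul_ne_zero hn hn1 this.symm
  obtain ⟨V0, hV0⟩ := IsAlgClosed.exists_pow_nat_eq (-κ) (n := 2) (by norm_num)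
  have hV00 : V0 ≠ 0 := by
    rintro rfl; apply hκ0; simpa using hV0.symm
  have hgm : g.map PowerSeries.constantCoeff = X ^ (N + 2) + C κ * X ^ N := by
    simp only [g, Polynomial.map_add, Polynomial.map_pow, Polynomial.map_X, Polynomial.map_sum,
      Polynomial.map_mul, Polynomial.map_C]
    rw [Finset.sum_range_succ']
    have : ∀ j ∈ Finset.range N, C (PowerSeries.constantCoeff (c (j + 1))) * X ^ (N - (j + 1))
        = (0 : k[X]) := by
      intro j _; simp [c]
    rw [Finset.sum_eq_zero this]
    simp [c, hκ]
  obtain ⟨M, rfl⟩ : ∃ M, N = M + 1 := ⟨N - 1, by omega⟩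
  obtain ⟨V, hV, hVc⟩ := hensel_ps g hg V0
    (by rw [hgm]; simp only [eval_add, eval_pow, eval_X, eval_mul, eval_C]
        linear_combination V0 ^ (M + 1) * hV0)
    (by
      rw [hgm]
      simp only [derivative_add, derivative_X_pow, derivative_C_mul, eval_add, eval_mul, eval_C,
        eval_pow, eval_X]
      simp only [Nat.cast_add, Nat.cast_one, Nat.cast_ofNat, Nat.add_sub_cancel]
      have : ((M : k) + 1 + 2) * V0 ^ (M + 1 + 2 - 1) + κ * (((M : k) + 1) * V0 ^ M)
          = -2 * κ * V0 ^ M := by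
        have : M + 1 + 2 - 1 = M + 2 := by omega
        rw [this]; linear_combination ((M : k) + 3) * V0 ^ M * hV0
      rw [this]
      exact mul_ne_zero (mul_ne_zero (by simpa using h2) hκ0) (pow_ne_zero _ hV00))
  have hVi : V * V⁻¹ = 1 := PowerSeries.mul_inv_cancel _ (by rw [hVc]; exact hV00)
  refine ⟨PowerSeries.C η + PowerSeries.X * V⁻¹, ?_, by simp, ?_⟩
  · set U := V⁻¹ with hU
    set E := PowerSeries.C η with hE
    set S := (PowerSeries.X : k⟦X⟧) with hS
    have hEη : ((M + 1 + 2 : ℕ) : k⟦X⟧) * E ^ (M + 1 + 1) = 1 := by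
      rw [hE, ← map_pow, ← map_natCast (PowerSeries.C (R := k)), ← map_mul, hη, map_one]
    have h1 : 1 + ∑ j ∈ Finset.range (M + 1 + 1), c j * U ^ (j + 2) = 0 := by
      have : U ^ (M + 1 + 2) * g.eval V = 0 := by rw [hV, mul_zero]
      simp only [g, eval_add, eval_pow, eval_X, eval_finsetSum, eval_mul, eval_C] at this
      rw [mul_add, ← mul_pow, mul_comm U, hVi, one_pow, Finset.mul_sum] at this
      rw [← this]; congr 1
      apply Finset.sum_congr rfl
      intro j hj
      have hj' : M + 1 + 2 = (j + 2) + (M + 1 - j) := by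
        have := Finset.mem_range.1 hj; omega
      rw [hj', pow_add U (j + 2)]
      calc c j * U ^ (j + 2) = c j * U ^ (j + 2) * (V * U) ^ (M + 1 - j) := by
            rw [hVi, one_pow, mul_one]
        _ = _ := by rw [mul_pow]; ring
    have h3 : (E + S * U) ^ (M + 1 + 2) = E ^ (M + 1 + 2) + S * U +
        S ^ 2 * ∑ j ∈ Finset.range (M + 1 + 1), c j * U ^ (j + 2) := by
      rw [add_comm E, add_pow, Finset.sum_range_succ', Finset.sum_range_succ', Finset.mul_sum]
      have : ∀ j ∈ Finset.range (M + 1 + 1), (S * U) ^ (j + 1 + 1) * E ^ (M + 1 + 2 - (j + 1 + 1)) *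
          ((M + 1 + 2).choose (j + 1 + 1) : k⟦X⟧) = S ^ 2 * (c j * U ^ (j + 2)) := by
        intro j hj
        have : M + 1 + 2 - (j + 1 + 1) = M + 1 - j := by omega
        rw [this]
        simp only [c, map_mul, map_pow, map_natCast]
        rw [← hE, ← hS]; ring
      rw [Finset.sum_congr rfl this]
      have h4 : M + 1 + 2 - (0 + 1) = M + 1 + 1 := by omega
      rw [h4]
      simp only [Nat.sub_zero, zero_add, pow_one, pow_zero, Nat.choose_one_right, Nat.choose_zero_right]
      push_cast at hEη ⊢
      linear_combination (S * U) * hEη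
    rw [h3, map_sub, map_pow, ← hE]
    linear_combination S ^ 2 * h1
  · rw [map_add, PowerSeries.coeff_C]
    rw [show (1 : ℕ) = 0 + 1 from rfl, PowerSeries.coeff_succ_X_mul]
    simp [PowerSeries.constantCoeff_inv, hVc, hV00]

/-- The data of the local analysis: `n` distinct roots of `Y ^ n - Y + t` in `k⟦S⟧` (the variable `S`
being `PowerSeries.X`) on which some endomorphism of `k⟦S⟧`, in practice `S ↦ -S`, acts as a
transposition. -/
structure RootData (k : Type*) [Field k] (n : ℕ) where
  /-- the roots -/
  y : Fin n → k⟦X⟧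
  /-- the parameter -/
  t : k⟦X⟧
  /-- the index of a ramified root -/
  i₀ : Fin n
  /-- the index of the conjugate root -/
  i₁ : Fin n
  ne : i₀ ≠ i₁
  inj : Function.Injective y
  root : ∀ i, y i ^ n - y i + t = 0
  /-- the involution -/
  σ : k⟦X⟧ →ₐ[k] k⟦X⟧
  σ_y : ∀ i, σ (y i) = y (Equiv.swap i₀ i₁ i)
  coeff_ne : PowerSeries.coeff 1 (y i₀) ≠ 0

/-- Over a critical value the double root splits into two branches in `√(t - t₀)` and the other roots
lift by Hensel's lemma. -/
theorem exists_rootData {k : Type*} [Field k] [IsAlgClosed k] (N : ℕ) (hN : 1 ≤ N)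
    (hn : ((N + 2 : ℕ) : k) ≠ 0) (hn1 : ((N + 1 : ℕ) : k) ≠ 0) (h2 : (2 : k) ≠ 0) :
    Nonempty (RootData k (N + 2)) := by
  obtain ⟨η, hη⟩ := IsAlgClosed.exists_pow_nat_eq (((N + 2 : ℕ) : k)⁻¹) (n := N + 1) (by omega)
  have hη : ((N + 2 : ℕ) : k) * η ^ (N + 1) = 1 := by rw [hη, mul_inv_cancel₀ hn]
  obtain ⟨ρ, hρi, hρ⟩ := exists_simple_roots N hn hn1 η hη
  obtain ⟨y0, hy0, hy0c, hy01⟩ := exists_double_branch N hN hn hn1 h2 η hη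
  set t : k⟦X⟧ := PowerSeries.C (η - η ^ (N + 2)) + PowerSeries.X ^ 2 with ht
  have hr : ∀ i, ∃ z : k⟦X⟧, z ^ (N + 2) - z + t = 0 ∧ PowerSeries.constantCoeff z = ρ i := by
    intro i
    have hmap : (X ^ (N + 2) + (- X + C t) : k⟦X⟧[X]).map PowerSeries.constantCoeff =
        X ^ (N + 2) + (- X + C (η - η ^ (N + 2))) := by
      simp [ht]
    obtain ⟨z, hz, hzc⟩ := hensel_ps (X ^ (N + 2) + (- X + C t)) (monic_X_pow_add (by
        refine lt_of_le_of_lt (b := (1 : WithBot ℕ)) (by compute_degree) ?_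
        exact_mod_cast (by omega : 1 < N + 2))) (ρ i)
        (by rw [hmap]; simp only [eval_add, eval_pow, eval_X, eval_neg, eval_C]
            linear_combination (hρ i).2.1)
        (by rw [hmap]
            simp only [derivative_add, derivative_X_pow, derivative_neg, derivative_X, derivative_C]
            have := (hρ i).2.2
            simpa [sub_eq_add_neg] using this)
    refine ⟨z, ?_, hzc⟩
    simp only [eval_add, eval_pow, eval_X, eval_neg, eval_C] at hz
    linear_combination hz
  choose z hz hzc using hr
  let σ : k⟦X⟧ →ₐ[k] k⟦X⟧ := PowerSeries.rescaleAlgHom (-1 : k)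
  have hσ : ∀ a, σ a = PowerSeries.rescale (-1 : k) a := fun a => by
    rw [← PowerSeries.coe_rescaleAlgHom]; rfl
  have hσcoeff : ∀ a m, PowerSeries.coeff m (σ a) = (-1) ^ m * PowerSeries.coeff m a := by
    intro a m; rw [hσ, PowerSeries.coeff_rescale]
  have hσσ : ∀ a, σ (σ a) = a := by
    intro a; ext m; rw [hσcoeff, hσcoeff, ← mul_assoc, ← mul_pow]; simp
  have hσc : ∀ a, PowerSeries.constantCoeff (σ a) = PowerSeries.constantCoeff a := by
    intro a; rw [← PowerSeries.coeff_zero_eq_constantCoeff_apply, hσcoeff]; simp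
  have hσt : σ t = t := by
    ext m; rw [hσcoeff, ht, map_add, PowerSeries.coeff_C, PowerSeries.coeff_X_pow]
    split_ifs <;> simp_all
  have hσroot : ∀ a, a ^ (N + 2) - a + t = 0 → (σ a) ^ (N + 2) - σ a + t = 0 := by
    intro a ha; have := congrArg σ ha
    simpa [hσt] using this
  have hσz : ∀ i, σ (z i) = z i := by
    intro i
    have h1 := hσroot _ (hz i)
    have h2 : (∑ j ∈ Finset.range (N + 2), (σ (z i)) ^ j * (z i) ^ (N + 2 - 1 - j) - 1) *
        (σ (z i) - z i) = 0 := by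
      rw [sub_mul, Commute.geom_sum₂_mul (Commute.all _ _)]
      linear_combination h1 - hz i
    rcases mul_eq_zero.1 h2 with h3 | h3
    · exfalso; apply (hρ i).2.2
      have := congrArg PowerSeries.constantCoeff h3
      simp only [map_sub, map_sum, map_mul, map_pow, map_one, map_zero, hσc, hzc] at this
      rw [← this]; congr 1
      rw [Finset.sum_congr rfl (g := fun _ => ρ i ^ (N + 1))]
      · simp
      · intro j hj
        rw [← pow_add]; congr 1
        have := Finset.mem_range.1 hj; omega
    · exact sub_eq_zero.1 h3
  have hne01 : y0 ≠ σ y0 := by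
    intro h
    have := congrArg (PowerSeries.coeff 1) h
    rw [hσcoeff] at this
    have h4 : 2 * PowerSeries.coeff 1 y0 = 0 := by linear_combination this
    exact mul_ne_zero h2 hy01 h4
  refine ⟨⟨Fin.cons y0 (Fin.cons (σ y0) z), t, 0, 1, by simp, ?_, ?_, σ, ?_, by simpa using hy01⟩⟩
  · have hzi : Function.Injective z := fun i j h => hρi (by rw [← hzc, ← hzc, h])
    have hz0 : ∀ a : k⟦X⟧, PowerSeries.constantCoeff a = η → a ∉ Set.range z := by
      rintro a ha ⟨i, rfl⟩; exact (hρ i).1 (by rw [← hzc, ha])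
    rw [Fin.cons_injective_iff, Fin.cons_injective_iff]
    refine ⟨?_, hz0 _ (by rw [hσc, hy0c]), hzi⟩
    rw [Fin.range_cons]
    rintro (h | h)
    · exact hne01 h
    · exact hz0 _ hy0c h
  · intro i
    refine Fin.cases ?_ (fun i => Fin.cases ?_ (fun i => ?_) i) i
    · simpa using hy0
    · simpa using hσroot _ hy0
    · simpa using hz i
  · intro i
    refine Fin.cases ?_ (fun i => Fin.cases ?_ (fun i => ?_) i) i
    · rw [Equiv.swap_apply_left]; rfl
    · rw [show Fin.succ (0 : Fin (N + 1)) = 1 from rfl, Equiv.swap_apply_right]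
      exact hσσ y0
    · rw [Equiv.swap_apply_of_ne_of_ne (by exact Fin.succ_ne_zero _)]
      · simp [hσz]
      · intro h
        have h' : (i.succ).succ = (0 : Fin (N + 1)).succ := h
        exact Fin.succ_ne_zero _ (Fin.succ_injective _ h')

end Trinomial

/-! ### All permutations of the roots preserve their relations -/

namespace Trinomial
open scoped PowerSeries

/-- `1 + W + ⋯ + W ^ (n - 1) - s ^ (n - 1)` is irreducible over `k[s]`: as a polynomial in `s` it is
Eisenstein at `W - ζ` for a simple root `ζ` of `1 + W + ⋯ + W ^ (n - 1)`. -/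
theorem irreducible_geom {k : Type*} [Field k] [IsAlgClosed k] (n : ℕ) (hn2 : 2 ≤ n)
    (hn : (n : k) ≠ 0) :
    Irreducible (∑ i ∈ Finset.range n, X ^ i - C (X ^ (n - 1)) : k[X][X]) := by
  set Φ : k[X] := ∑ i ∈ Finset.range n, X ^ i with hΦ
  have hgeom : Φ * (X - 1) = X ^ n - 1 := geom_sum_mul X n
  have hdeg : Φ.degree ≠ 0 := by
    intro h
    have h1 := congrArg degree hgeom
    rw [degree_mul, h, zero_add, ← C_1, degree_X_sub_C, degree_X_pow_sub_C (by omega)] at h1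
    have : 1 = n := by exact_mod_cast h1
    omega
  obtain ⟨ζ, hζ⟩ := IsAlgClosed.exists_root Φ hdeg
  have hζn : ζ ^ n = 1 := by
    have := congrArg (eval ζ) hgeom
    rw [eval_mul, hζ.eq_zero] at this
    simp at this; linear_combination -this
  have hder : Φ.derivative.eval ζ ≠ 0 := by
    intro h0
    have := congrArg (fun p => eval ζ (derivative p)) hgeom
    simp only [derivative_mul, eval_add, eval_mul, h0, hζ.eq_zero, derivative_sub,
      derivative_X_pow, derivative_one, eval_sub] at this
    simp at this
    rcases this with h | h
    · exact hn h
    · have h3 : ζ = 0 := h.1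
      rw [h3, zero_pow (by omega)] at hζn; exact zero_ne_one hζn
  have hswap : Bivariate.swap (∑ i ∈ Finset.range n, X ^ i - C (X ^ (n - 1)) : k[X][X]) =
      - (X ^ (n - 1) - C Φ) := by
    have h1 : (∑ i ∈ Finset.range n, X ^ i : k[X][X]) = Φ.map C := by
      simp [hΦ, Polynomial.map_sum]
    rw [h1, map_sub, Bivariate.swap_map_C, Bivariate.swap_C]
    simp
  rw [← MulEquiv.irreducible_iff (Bivariate.swap (R := k)), hswap]
  refine (Associated.irreducible_iff ⟨-1, by simp⟩ :
    Irreducible (X ^ (n - 1) - C Φ : k[X][X]) ↔ _).1 ?_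
  have hm : (X ^ (n - 1) - C Φ : k[X][X]).Monic := monic_X_pow_sub_C _ (by omega)
  have hd : (X ^ (n - 1) - C Φ : k[X][X]).degree = (n - 1 : ℕ) :=
    degree_X_pow_sub_C (by omega) _
  have hp : (Ideal.span {X - C ζ} : Ideal k[X]).IsPrime :=
    (Ideal.span_singleton_prime (X_sub_C_ne_zero ζ)).2 (prime_X_sub_C ζ)
  refine irreducible_of_eisenstein_criterion hp ?_ ?_ ?_ ?_ hm.isPrimitive
  · rw [hm.leadingCoeff]; exact fun h => hp.ne_top ((Ideal.eq_top_iff_one _).2 h)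
  · intro i hi
    rw [hd] at hi
    have hi : i < n - 1 := by exact_mod_cast hi
    rw [coeff_sub, coeff_X_pow, if_neg (by omega), zero_sub, coeff_C]
    split_ifs
    · rw [neg_mem_iff, Ideal.mem_span_singleton, dvd_iff_isRoot]; exact hζ
    · simp
  · rw [hd]; exact_mod_cast (by omega : 0 < n - 1)
  · rw [coeff_sub, coeff_X_pow, if_neg (by omega), zero_sub, coeff_C_zero, neg_mem_iff,
      Ideal.span_singleton_pow, Ideal.mem_span_singleton]
    rintro ⟨g, hg⟩
    apply hder
    rw [hg]; simp [derivative_mul, derivative_pow]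

theorem monic_geom {k : Type*} [Field k] (n : ℕ) (hn2 : 2 ≤ n) :
    (∑ i ∈ Finset.range n, X ^ i - C (X ^ (n - 1)) : k[X][X]).Monic ∧
    (∑ i ∈ Finset.range n, X ^ i - C (X ^ (n - 1)) : k[X][X]).natDegree = n - 1 := by
  obtain ⟨N, rfl⟩ : ∃ N, n = N + 2 := ⟨n - 2, by omega⟩
  have hG : (∑ i ∈ Finset.range (N + 2), X ^ i - C (X ^ (N + 2 - 1)) : k[X][X]) =
      X ^ (N + 1) + (∑ i ∈ Finset.range (N + 1), X ^ i - C (X ^ (N + 1))) := by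
    rw [Finset.sum_range_succ]
    have : N + 2 - 1 = N + 1 := rfl
    rw [this]; ring
  have hd : (∑ i ∈ Finset.range (N + 1), X ^ i - C (X ^ (N + 1)) : k[X][X]).degree
      < ((N + 1 : ℕ) : WithBot ℕ) := by
    refine lt_of_le_of_lt (degree_sub_le _ _) (max_lt ?_ ?_)
    · refine lt_of_le_of_lt (degree_sum_le _ _) ?_
      rw [Finset.sup_lt_iff (WithBot.bot_lt_coe _)]
      intro j hj
      rw [degree_X_pow]; exact_mod_cast Finset.mem_range.1 hj
    · exact lt_of_le_of_lt degree_C_le (by exact_mod_cast Nat.succ_pos N)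
  refine ⟨by rw [hG]; exact monic_X_pow_add hd, ?_⟩
  rw [hG, natDegree_add_eq_left_of_degree_lt]
  · simp
  · simpa using hd

/-- Any two elements of a set of `d` roots of an irreducible polynomial of degree `d` are
conjugate. -/
theorem exists_conj_aux {L K : Type*} [Field L] [Field K] [Algebra L K] (G : L[X])
    (hG : Irreducible G) (hm : G.Monic) {ι : Type*} [Fintype ι]
    (hι : Fintype.card ι = G.natDegree) (w : ι → K) (hw : Function.Injective w)
    (hroot : ∀ i, aeval (w i) G = 0) (i j : ι) :
    ∃ φ : IntermediateField.adjoin L (Set.range w) →ₐ[L] K,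
      φ ⟨w i, IntermediateField.subset_adjoin _ _ ⟨i, rfl⟩⟩ = w j := by
  classical
  have hmin : ∀ i, minpoly L (w i) = G := fun i =>
    (minpoly.eq_of_irreducible_of_monic hG (hroot i) hm).symm
  have hInt : ∀ i, IsIntegral L (w i) := fun i => ⟨G, hm, hroot i⟩
  have hsplit : (G.map (algebraMap L K)).Splits := by
    have hm0 : G.map (algebraMap L K) ≠ 0 := (hm.map _).ne_zero
    rw [splits_iff_card_roots]
    refine le_antisymm (card_roots' _) ?_
    rw [hm.natDegree_map, ← hι]
    calc Fintype.card ι = (Finset.univ.image w).card := by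
          rw [Finset.card_image_of_injective _ hw]; rfl
      _ ≤ (G.map (algebraMap L K)).roots.toFinset.card := by
          apply Finset.card_le_card
          intro x hx
          obtain ⟨i, -, rfl⟩ := Finset.mem_image.1 hx
          rw [Multiset.mem_toFinset, mem_roots hm0, IsRoot.def, eval_map_algebraMap, hroot]
      _ ≤ _ := Multiset.toFinset_card_le _
  exact IntermediateField.exists_algHom_adjoin_of_splits_of_aeval
    (by rintro _ ⟨i, rfl⟩; exact ⟨hInt i, by rw [hmin]; exact hsplit⟩)
    (IntermediateField.subset_adjoin L _ (Set.mem_range_self i))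
    (by rw [hmin, hroot])

/-- A form of `exists_conj` with the field `L = k(s)` abstract, so that the embedding `L → K` can be
any map sending the variable to the transcendental element `s`. -/
theorem exists_conj_tower {k K : Type*} (L : Type*) [Field k] [IsAlgClosed k] [Field K] [Algebra k K]
    [Field L] [Algebra k[X] L] [IsFractionRing k[X] L] [Algebra k L] [IsScalarTower k k[X] L]
    [Algebra L K] [IsScalarTower k L K] (n : ℕ)
    (hn2 : 2 ≤ n) (hn : (n : k) ≠ 0) (s : K) (hs : algebraMap L K (algebraMap k[X] L X) = s)
    {ι : Type*} [Fintype ι]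
    (hι : Fintype.card ι = n - 1) (w : ι → K) (hw : Function.Injective w)
    (hroot : ∀ i, ∑ j ∈ Finset.range n, w i ^ j = s ^ (n - 1)) (i j : ι) :
    ∃ (A : IntermediateField k K) (φ : A →ₐ[k] K) (hsA : s ∈ A) (hwA : ∀ i, w i ∈ A),
      φ ⟨s, hsA⟩ = s ∧ φ ⟨w i, hwA i⟩ = w j := by
  obtain ⟨hGm, hGd⟩ := monic_geom (k := k) n hn2
  obtain ⟨φ, hφ⟩ := exists_conj_aux
    ((∑ i ∈ Finset.range n, X ^ i - C (X ^ (n - 1)) : k[X][X]).map (algebraMap k[X] L))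
    ((hGm.irreducible_iff_irreducible_map_fraction_map (K := L)).1 (irreducible_geom n hn2 hn))
    (hGm.map _) (by rw [hGm.natDegree_map, hGd, hι]) w hw (by
      intro i
      have := hroot i
      simp [Polynomial.map_sum, hs, this]) i j
  have hwA : ∀ i, w i ∈ (IntermediateField.adjoin L (Set.range w)).restrictScalars k := fun i =>
    IntermediateField.subset_adjoin L _ (Set.mem_range_self i)
  have hsA : s ∈ IntermediateField.adjoin L (Set.range w) := by
    rw [← hs]; exact IntermediateField.algebraMap_mem _ _
  have hφs : φ ⟨s, hsA⟩ = s := by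
    have h1 := φ.commutes (algebraMap k[X] L X)
    rw [hs] at h1
    have h2 : (⟨s, hsA⟩ : IntermediateField.adjoin L (Set.range w)) =
      algebraMap L _ (algebraMap k[X] L X) := Subtype.ext hs.symm
    rw [h2, h1]
  exact ⟨(IntermediateField.adjoin L (Set.range w)).restrictScalars k, φ.restrictScalars k,
    hsA, hwA, hφs, hφ⟩

/-- Any two roots of `1 + W + ⋯ + W ^ (n - 1) - s ^ (n - 1)` are conjugate over `k(s)`. -/
theorem exists_conj {k K : Type*} [Field k] [IsAlgClosed k] [Field K] [Algebra k K] (n : ℕ)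
    (hn2 : 2 ≤ n) (hn : (n : k) ≠ 0) (s : K) (hs : Transcendental k s) {ι : Type*} [Fintype ι]
    (hι : Fintype.card ι = n - 1) (w : ι → K) (hw : Function.Injective w)
    (hroot : ∀ i, ∑ j ∈ Finset.range n, w i ^ j = s ^ (n - 1)) (i j : ι) :
    ∃ (A : IntermediateField k K) (φ : A →ₐ[k] K) (hsA : s ∈ A) (hwA : ∀ i, w i ∈ A),
      φ ⟨s, hsA⟩ = s ∧ φ ⟨w i, hwA i⟩ = w j := by
  have hinj : Function.Injective (aeval s : k[X] →ₐ[k] K).toRingHom :=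
    transcendental_iff_injective.1 hs
  let g : FractionRing k[X] →+* K := IsFractionRing.lift hinj
  have hg : ∀ p : k[X], g (algebraMap k[X] _ p) = aeval s p := fun p =>
    IsFractionRing.lift_algebraMap hinj p
  let _ : Algebra (FractionRing k[X]) K := g.toAlgebra
  have hgm : ∀ x, algebraMap (FractionRing k[X]) K x = g x := fun _ => rfl
  have : IsScalarTower k (FractionRing k[X]) K := IsScalarTower.of_algebraMap_eq fun a => by
    rw [hgm, IsScalarTower.algebraMap_apply k k[X] (FractionRing k[X]), hg]; simp
  exact exists_conj_tower (FractionRing k[X]) n hn2 hn s (by rw [hgm, hg, aeval_X]) hι w hw hroot i j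

variable {k : Type*} [Field k] {n : ℕ}

namespace RootData

variable (D : RootData k n)

theorem two_le (D : RootData k n) : 2 ≤ n := by
  rcases D with ⟨-, -, i, j, hij, -⟩
  have := i.2; have := j.2
  by_contra h
  exact hij (Fin.ext (by omega))

theorem transcendental_y [IsAlgClosed k] (i : Fin n) : Transcendental k (D.y i) := by
  -- an algebraic element of a domain over `k` is a constant
  have hconst : ∀ z : k⟦X⟧, IsAlgebraic k z → ∃ a, algebraMap k k⟦X⟧ a = z := by
    intro z hz
    have hmin := IsAlgClosed.degree_eq_one_of_irreducible k (minpoly.irreducible hz.isIntegral)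
    exact minpoly.mem_range_of_degree_eq_one k z hmin
  intro hi
  obtain ⟨a, ha⟩ := hconst _ hi
  have hn := D.two_le
  have h0 : IsAlgebraic k (D.y D.i₀) := by
    refine ⟨X ^ n - X + C (a - a ^ n), fun h => ?_, ?_⟩
    · have := congrArg (fun p => coeff p 1) h
      simp only [coeff_add, coeff_sub, coeff_X_pow, coeff_X_one, coeff_C, coeff_zero] at this
      rw [if_neg (by omega), if_neg (by omega)] at this
      simp at this
    · simp only [map_add, map_sub, map_pow, aeval_X, aeval_C, ha]
      linear_combination D.root D.i₀ - D.root i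
  obtain ⟨b, hb⟩ := hconst _ h0
  apply D.coeff_ne
  rw [← hb, ← PowerSeries.C_eq_algebraMap, PowerSeries.coeff_C]; simp

/-- The permutations preserving all polynomial relations between the roots. -/
def relPerm : Submonoid (Equiv.Perm (Fin n)) where
  carrier := {π | ∀ H : MvPolynomial (Fin n) k, MvPolynomial.aeval D.y H = 0 →
    MvPolynomial.aeval (D.y ∘ π) H = 0}
  one_mem' := fun H h => h
  mul_mem' := by
    intro π₁ π₂ h₁ h₂ H hH
    have h3 := h₁ (MvPolynomial.rename π₂ H) (by rw [MvPolynomial.aeval_rename]; exact h₂ H hH)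
    rw [MvPolynomial.aeval_rename] at h3
    exact h3

theorem swap_mem_relPerm : Equiv.swap D.i₀ D.i₁ ∈ D.relPerm := by
  intro H hH
  have h1 : (D.y ∘ Equiv.swap D.i₀ D.i₁) = fun i => D.σ (D.y i) := by
    ext1 i; rw [D.σ_y]; rfl
  rw [h1, ← MvPolynomial.comp_aeval_apply, hH, map_zero]

theorem inv_mem_relPerm {π : Equiv.Perm (Fin n)} (h : π ∈ D.relPerm) : π⁻¹ ∈ D.relPerm := by
  have h1 : π⁻¹ ∈ Submonoid.powers π :=
    mem_powers_iff_mem_zpowers.2 (inv_mem (Subgroup.mem_zpowers π))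
  exact (Submonoid.powers_le.2 h) h1

/-- The roots other than `y c` are conjugate over `k(y c)`: the quotients `W = y i / y c` are the roots
of `1 + W + ⋯ + W ^ (n - 1) - s ^ (n - 1)` for `s = (y c)⁻¹`. The field `K` is any extension of the
power series. -/
theorem exists_relPerm_aux [IsAlgClosed k] {K : Type*} [Field K] [Algebra k K] (e : k⟦X⟧ →ₐ[k] K)
    (he : Function.Injective e) (hn : (n : k) ≠ 0) (c i j : Fin n) (hi : i ≠ c) (hj : j ≠ c) :
    ∃ π ∈ D.relPerm, π c = c ∧ π i = j := by
  have hyc : Transcendental k (e (D.y c)) := by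
    rw [Transcendental, isAlgebraic_algHom_iff e he]; exact D.transcendental_y c
  have hyc0 : e (D.y c) ≠ 0 := fun h => hyc (h ▸ isAlgebraic_zero)
  have hroot : ∀ i, e (D.y i) ^ n - e (D.y i) + e D.t = 0 := by
    intro i; rw [← map_pow, ← map_sub, ← map_add, D.root, map_zero]
  let ι := {i : Fin n // i ≠ c}
  let w : ι → K := fun i => e (D.y i) / e (D.y c)
  have hwne : ∀ i : ι, e (D.y i) ≠ e (D.y c) := fun i h => i.2 (D.inj (he h))
  have hn2 := D.two_le
  obtain ⟨A, φ, hsA, hwA, hφs, hφw⟩ := exists_conj n hn2 hn (e (D.y c))⁻¹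
    (by intro h; exact hyc (by simpa using h.inv)) (ι := ι) (by simp [ι, Fintype.card_subtype_compl])
    w (by
      intro a b hab
      have : e (D.y a) = e (D.y b) := by
        simpa [w, div_left_inj' hyc0] using hab
      exact Subtype.ext (D.inj (he this)))
    (by
      intro a
      have hne : w a - 1 ≠ 0 := by
        intro h; apply hwne a
        have : w a = 1 := by linear_combination h
        simpa [w, div_eq_one_iff_eq hyc0] using this
      apply mul_right_cancel₀ hne
      rw [geom_sum_mul]
      simp only [w]
      obtain ⟨N, rfl⟩ : ∃ N, n = N + 1 := ⟨n - 1, by omega⟩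
      have h1 := hroot a
      have h2 := hroot c
      have h3 : e (D.y a) ^ (N + 1) = e (D.y c) ^ (N + 1) + (e (D.y a) - e (D.y c)) := by
        linear_combination h1 - h2
      rw [div_pow, h3, Nat.add_sub_cancel, inv_pow, add_div, div_self (pow_ne_zero _ hyc0),
        add_sub_cancel_left, pow_succ]
      field_simp)
    ⟨i, hi⟩ ⟨j, hj⟩
  have hcA : e (D.y c) ∈ A := by simpa using inv_mem hsA
  have hyA : ∀ a, e (D.y a) ∈ A := by
    intro a
    by_cases ha : a = c
    · rw [ha]; exact hcA
    · have := mul_mem (hwA ⟨a, ha⟩) hcA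
      simpa [w, div_mul_cancel₀ _ hyc0] using this
  have hφc : φ ⟨e (D.y c), hcA⟩ = e (D.y c) := by
    have h1 : (⟨e (D.y c), hcA⟩ : A) = (⟨(e (D.y c))⁻¹, hsA⟩ : A)⁻¹ := Subtype.ext (by simp)
    rw [h1, map_inv₀, hφs, inv_inv]
  have hφi : φ ⟨e (D.y i), hyA i⟩ = e (D.y j) := by
    have h1 : (⟨e (D.y i), hyA i⟩ : A) = ⟨w ⟨i, hi⟩, hwA _⟩ * ⟨e (D.y c), hcA⟩ :=
      Subtype.ext (by simp [w, div_mul_cancel₀ _ hyc0])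
    rw [h1, map_mul, hφw, hφc]; simp [w, div_mul_cancel₀ _ hyc0]
  have hex : ∀ a, ∃ b, φ ⟨e (D.y a), hyA a⟩ = e (D.y b) := by
    intro a
    set z := φ ⟨e (D.y a), hyA a⟩ with hz
    have hzr : z ^ n - z + e D.t = 0 := by
      have h1 : (⟨e (D.y a), hyA a⟩ : A) ^ n - ⟨e (D.y a), hyA a⟩ =
          ⟨e (D.y c), hcA⟩ ^ n - ⟨e (D.y c), hcA⟩ := Subtype.ext (by
            simp only [AddSubgroupClass.coe_sub, SubmonoidClass.coe_pow]
            linear_combination hroot a - hroot c)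
      have h2 := congrArg φ h1
      rw [map_sub, map_sub, map_pow, map_pow, hφc, ← hz] at h2
      linear_combination h2 + hroot c
    by_contra hcon
    push Not at hcon
    -- otherwise `Y ^ n - Y + t` would have `n + 1` roots
    let p : K[X] := X ^ n + (- X + C (e D.t))
    have hd : (- X + C (e D.t) : K[X]).degree < (n : WithBot ℕ) := by
      refine lt_of_le_of_lt (b := (1 : WithBot ℕ)) (by compute_degree) ?_
      exact_mod_cast (by omega : 1 < n)
    have hm : p.Monic := monic_X_pow_add hd
    have hnd : p.natDegree = n := by
      rw [natDegree_add_eq_left_of_degree_lt]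
      · simp
      · simpa using hd
    classical
    have hsub : insert z (Finset.univ.image fun b => e (D.y b)) ⊆ p.roots.toFinset := by
      intro x hx
      rw [Multiset.mem_toFinset, mem_roots hm.ne_zero, IsRoot.def]
      simp only [p, eval_add, eval_pow, eval_X, eval_neg, eval_C]
      rcases Finset.mem_insert.1 hx with rfl | hx
      · linear_combination hzr
      · obtain ⟨b, -, rfl⟩ := Finset.mem_image.1 hx
        linear_combination hroot b
    have h1 := Finset.card_le_card hsub
    rw [Finset.card_insert_of_notMem (by
      intro h; obtain ⟨b, -, hb⟩ := Finset.mem_image.1 h; exact hcon b hb.symm),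
      Finset.card_image_of_injective _ (fun a b h => D.inj (he h)), Finset.card_univ,
      Fintype.card_fin] at h1
    have h2 := p.roots.toFinset_card_le
    have h3 := p.card_roots'
    omega
  choose f hf using hex
  have hfi : Function.Injective f := by
    intro a b hab
    have h1 : φ ⟨e (D.y a), hyA a⟩ = φ ⟨e (D.y b), hyA b⟩ := by rw [hf, hf, hab]
    have h2 := congrArg Subtype.val (φ.injective h1)
    exact D.inj (he h2)
  let π : Equiv.Perm (Fin n) := Equiv.ofBijective f (Finite.injective_iff_bijective.1 hfi)
  refine ⟨π, ?_, ?_, ?_⟩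
  · intro H hH
    apply he
    rw [map_zero]
    have h0 : MvPolynomial.aeval (fun a => (⟨e (D.y a), hyA a⟩ : A)) H = 0 := by
      apply Subtype.val_injective
      have h1 := congrArg e hH
      rw [map_zero, MvPolynomial.comp_aeval_apply] at h1
      rw [ZeroMemClass.coe_zero, ← h1]
      exact MvPolynomial.comp_aeval_apply _ A.val H
    have h1 := congrArg φ h0
    rw [map_zero, MvPolynomial.comp_aeval_apply] at h1
    rw [MvPolynomial.comp_aeval_apply, ← h1]
    congr 2
    ext1 a
    exact (hf a).symm
  · exact D.inj (he ((hf c).symm.trans hφc))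
  · exact D.inj (he ((hf i).symm.trans hφi))

theorem exists_relPerm [IsAlgClosed k] (hn : (n : k) ≠ 0) (c i j : Fin n) (hi : i ≠ c) (hj : j ≠ c) :
    ∃ π ∈ D.relPerm, π c = c ∧ π i = j :=
  D.exists_relPerm_aux (IsScalarTower.toAlgHom k k⟦X⟧ (FractionRing k⟦X⟧))
    (IsFractionRing.injective k⟦X⟧ (FractionRing k⟦X⟧)) hn c i j hi hj

/-- The monodromy group is symmetric: point stabilisers are transitive on the remaining points, and
there is a transposition. -/
theorem relPerm_eq_top [IsAlgClosed k] (hn : (n : k) ≠ 0) : D.relPerm = ⊤ := by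
  have conj : ∀ π ∈ D.relPerm, ∀ a b, Equiv.swap a b ∈ D.relPerm →
      Equiv.swap (π a) (π b) ∈ D.relPerm := by
    intro π hπ a b h
    rw [Equiv.swap_apply_apply]
    exact mul_mem (mul_mem hπ h) (D.inv_mem_relPerm hπ)
  have h1 : ∀ d, d ≠ D.i₀ → Equiv.swap D.i₀ d ∈ D.relPerm := by
    intro d hd
    obtain ⟨π, hπ, hc, hi⟩ := D.exists_relPerm hn D.i₀ D.i₁ d D.ne.symm hd
    have := conj π hπ _ _ D.swap_mem_relPerm
    rwa [hc, hi] at this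
  have h2 : ∀ c d, c ≠ d → Equiv.swap c d ∈ D.relPerm := by
    intro c d hcd
    by_cases hc : c = D.i₀
    · subst hc; exact h1 d hcd.symm
    · obtain ⟨π, hπ, hc', hi⟩ := D.exists_relPerm hn c D.i₀ d (Ne.symm hc) hcd.symm
      have h3 := h1 c hc
      rw [Equiv.swap_comm] at h3
      have := conj π hπ _ _ h3
      rwa [hc', hi] at this
  rw [eq_top_iff, ← Equiv.Perm.mclosure_isSwap, Submonoid.closure_le]
  rintro _ ⟨c, d, hcd, rfl⟩
  exact h2 c d hcd

/-- Every polynomial relation between the roots is invariant under all permutations. -/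
theorem aeval_perm [IsAlgClosed k] (hn : (n : k) ≠ 0) (π : Equiv.Perm (Fin n)) (H : MvPolynomial (Fin n) k)
    (hH : MvPolynomial.aeval D.y H = 0) : MvPolynomial.aeval (D.y ∘ π) H = 0 := by
  have : π ∈ D.relPerm := by rw [D.relPerm_eq_top hn]; trivial
  exact this H hH

end RootData
end Trinomial

/-! ### Independence of standard monomials -/

namespace Trinomial
open scoped PowerSeries

/-- Exponents of the standard monomials in `r + 1` variables: the `i`-th exponent is less than
`n - r + i` for `i < r`, the last one is free. -/
def Box (n r : ℕ) (α : Fin (r + 1) →₀ ℕ) : Prop := ∀ i : Fin r, α i.castSucc + r < n + i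

theorem aeval_finSucc {k S : Type*} [CommRing k] [CommRing S] [Algebra k S] {m : ℕ} (v : Fin (m + 1) → S)
    (H : MvPolynomial (Fin (m + 1)) k) :
    MvPolynomial.aeval v H = (((MvPolynomial.finSuccEquiv k m H).map
      (MvPolynomial.aeval (R := k) (fun i : Fin m => v i.succ)).toRingHom).eval (v 0)) := by
  induction H using MvPolynomial.induction_on with
  | C a => simp [MvPolynomial.finSuccEquiv_apply]
  | add p q hp hq => simp only [map_add, hp, hq, Polynomial.map_add, eval_add]
  | mul_X p i hp =>
    simp only [map_mul, hp, Polynomial.map_mul, eval_mul, MvPolynomial.aeval_X]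
    congr 1
    refine Fin.cases ?_ (fun j => ?_) i
    · simp [MvPolynomial.finSuccEquiv_X_zero]
    · simp [MvPolynomial.finSuccEquiv_X_succ]

namespace RootData
variable {k : Type*} [Field k] {n : ℕ} (D : RootData k n)

/-- Standard monomials in distinct roots `y i` are linearly independent over `k`. By invariance of
relations, a relation seen as a polynomial in the first root is satisfied by all roots not involved
elsewhere, of which there are more than its degree. -/
theorem box_indep [IsAlgClosed k] (hn : (n : k) ≠ 0) (r : ℕ) : ∀ (w : Fin (r + 1) → Fin n),
    Function.Injective w → ∀ H : MvPolynomial (Fin (r + 1)) k, (∀ α ∈ H.support, Box n r α) →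
    MvPolynomial.aeval (fun i => D.y (w i)) H = 0 → H = 0 := by
  induction r with
  | zero =>
    intro w hw H _ h0
    have h1 : AlgebraicIndependent k (fun i : Fin 1 => D.y (w i)) :=
      (algebraicIndependent_unique_type_iff (ι := Fin 1)).2 (D.transcendental_y _)
    exact (algebraicIndependent_iff.1 h1) H h0
  | succ r ih =>
    intro w hw H hB h0
    set P := MvPolynomial.finSuccEquiv k (r + 1) H with hP
    set ψ := (MvPolynomial.aeval (R := k) (fun i : Fin (r + 1) => D.y (w i.succ))) with hψ
    have hw' : Function.Injective (fun i : Fin (r + 1) => w i.succ) :=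
      hw.comp (Fin.succ_injective _)
    have hle : r + 2 ≤ n := by
      have := Fintype.card_le_of_injective w hw
      simp only [Fintype.card_fin] at this
      omega
    have hcoeff : ∀ m, n - (r + 1) ≤ m → P.coeff m = 0 := by
      intro m hm
      ext β
      rw [MvPolynomial.finSuccEquiv_coeff_coeff, MvPolynomial.coeff_zero]
      by_contra hne
      have := hB _ (MvPolynomial.mem_support_iff.2 hne) 0
      simp at this
      omega
    have hroot : ∀ b : Fin n, b ∉ Set.range (fun i : Fin (r + 1) => w i.succ) →
        (P.map ψ.toRingHom).eval (D.y b) = 0 := by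
      intro b hb
      have h2 := D.aeval_perm hn (Equiv.swap (w 0) b) (MvPolynomial.rename w H)
        (by rw [MvPolynomial.aeval_rename]; exact h0)
      rw [MvPolynomial.aeval_rename, aeval_finSucc] at h2
      have h3 : (fun i : Fin (r + 1) => ((D.y ∘ ⇑(Equiv.swap (w 0) b)) ∘ w) i.succ)
          = fun i : Fin (r + 1) => D.y (w i.succ) := by
        funext i
        simp only [Function.comp_apply]
        rw [Equiv.swap_apply_of_ne_of_ne]
        · exact fun h => Fin.succ_ne_zero i (hw h)
        · exact fun h => hb ⟨i, h⟩
      rw [h3] at h2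
      simpa using h2
    have hp0 : P.map ψ.toRingHom = 0 := by
      classical
      let s : Finset (Fin n) := (Finset.univ.image (fun i : Fin (r + 1) => w i.succ))ᶜ
      have hs : s.card = n - (r + 1) := by
        rw [Finset.card_compl, Finset.card_image_of_injective _ hw']
        simp
      by_contra hne
      have hd : (P.map ψ.toRingHom).natDegree < n - (r + 1) := by
        by_contra hlt
        have h5 := hcoeff _ (not_lt.1 hlt)
        apply hne
        rw [← leadingCoeff_eq_zero, leadingCoeff, coeff_map, h5, map_zero]
      apply hne
      refine eq_zero_of_natDegree_lt_card_of_eval_eq_zero' _ (s.image D.y) ?_ ?_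
      · intro z hz
        obtain ⟨b, hb, rfl⟩ := Finset.mem_image.1 hz
        apply hroot
        rintro ⟨i, hi⟩
        simp only [s, Finset.mem_compl, Finset.mem_image, Finset.mem_univ, true_and, not_exists] at hb
        exact hb i hi
      · rw [Finset.card_image_of_injective _ D.inj, hs]
        exact hd
    have hP0 : P = 0 := by
      ext1 m
      rw [coeff_zero]
      apply ih _ hw'
      · intro β hβ i
        have h6 := hB _ (MvPolynomial.mem_support_coeff_finSuccEquiv.1 hβ) i.succ
        rw [← Fin.succ_castSucc, Finsupp.cons_succ] at h6
        simp at h6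
        omega
      · have h7 := congrArg (fun p => coeff p m) hp0
        simpa [coeff_map] using h7
    exact (MvPolynomial.finSuccEquiv k (r + 1)).injective (by rw [← hP, hP0, map_zero])

end RootData
end Trinomial

/-! ### Reduction to standard monomials -/

namespace Trinomial
open scoped PowerSeries

/-- `conv u g m = ∑ i ≤ m, u ^ (m - i) * g i`. -/
def conv {R : Type*} [CommRing R] (u : R) (g : ℕ → R) : ℕ → R
  | 0 => g 0
  | m + 1 => g (m + 1) + u * conv u g m

/-- `hs v j m` is the complete homogeneous symmetric polynomial of degree `m` in `v 0, …, v j`. -/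
def hs {R : Type*} [CommRing R] (v : ℕ → R) : ℕ → ℕ → R
  | 0 => fun m => v 0 ^ m
  | j + 1 => conv (v (j + 1)) (hs v j)

theorem conv_conv {R : Type*} [CommRing R] (u w : R) (g : ℕ → R) (m : ℕ) :
    (u - w) * conv u (conv w g) m = conv u g (m + 1) - conv w g (m + 1) := by
  induction m with
  | zero => simp only [conv]; ring
  | succ m ih =>
    have h1 : conv u (conv w g) (m + 1) = conv w g (m + 1) + u * conv u (conv w g) m := rfl
    have h2 : conv u g (m + 1 + 1) = g (m + 1 + 1) + u * conv u g (m + 1) := rfl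
    have h3 : conv w g (m + 1 + 1) = g (m + 1 + 1) + w * conv w g (m + 1) := rfl
    rw [h1, h2, h3]
    linear_combination u * ih

theorem conv_pow {R : Type*} [CommRing R] (u w : R) (m : ℕ) :
    (u - w) * conv u (fun i => w ^ i) m = u ^ (m + 1) - w ^ (m + 1) := by
  induction m with
  | zero => simp [conv]
  | succ m ih =>
    have h1 : conv u (fun i => w ^ i) (m + 1) = w ^ (m + 1) + u * conv u (fun i => w ^ i) m := rfl
    rw [h1]
    linear_combination u * ih

theorem map_conv {R S : Type*} [CommRing R] [CommRing S] (f : R →+* S) (u : R) (g : ℕ → R) (m : ℕ) :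
    f (conv u g m) = conv (f u) (fun i => f (g i)) m := by
  induction m with
  | zero => rfl
  | succ m ih => simp only [conv, map_add, map_mul, ih]

theorem map_hs {R S : Type*} [CommRing R] [CommRing S] (f : R →+* S) (v : ℕ → R) (j : ℕ) :
    ∀ m, f (hs v j m) = hs (fun i => f (v i)) j m := by
  induction j with
  | zero => intro m; simp [hs]
  | succ j ih =>
    intro m
    simp only [hs]
    rw [map_conv]
    congr 1
    funext i
    exact ih i

/-- The divided differences of `Y ^ n - Y` vanish at distinct points where this polynomial takes
the same value. -/
theorem conv_hs_eq {R : Type*} [CommRing R] [IsDomain R] (n r : ℕ) (hr : r < n) (v : ℕ → R) (t : R)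
    (hinj : ∀ i ≤ r, ∀ j ≤ r, v i = v j → i = j) (hv : ∀ i ≤ r, v i ^ n - v i = t) (j : ℕ) :
    ∀ l, j < l → l ≤ r → conv (v l) (hs v j) (n - j - 1) = if j = 0 then 1 else 0 := by
  induction j with
  | zero =>
    intro l hl hlr
    have hne : v l - v 0 ≠ 0 := fun h => by
      have := hinj l hlr 0 (by omega) (sub_eq_zero.1 h)
      omega
    apply mul_left_cancel₀ hne
    simp only [hs]
    rw [conv_pow]
    have : n - 0 - 1 + 1 = n := by omega
    rw [this, if_pos trivial]
    linear_combination hv l hlr - hv 0 (by omega)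
  | succ j ih =>
    intro l hl hlr
    have hne : v l - v (j + 1) ≠ 0 := fun h => by
      have := hinj l hlr (j + 1) (by omega) (sub_eq_zero.1 h)
      omega
    apply mul_left_cancel₀ hne
    simp only [hs]
    rw [conv_conv]
    have : n - (j + 1) - 1 + 1 = n - j - 1 := by omega
    rw [this, ih l (by omega) hlr, ih (j + 1) (by omega) (by omega)]
    simp

section Red
variable (k : Type*) [Field k] (n r : ℕ)

/-- The variables in reverse order. -/
noncomputable def rv (j : ℕ) : MvPolynomial (Fin (r + 1)) k :=
  MvPolynomial.X (⟨r - j, by omega⟩ : Fin (r + 1))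

/-- The relation with leading monomial `X_i ^ (n - j - 1)`, where `i = r - (j + 1)`. -/
noncomputable def rel (j : ℕ) : MvPolynomial (Fin (r + 1)) k :=
  hs (rv k r) (j + 1) (n - j - 1) - if j = 0 then 1 else 0

/-- The ideal generated by the relations `rel`. -/
noncomputable def relIdeal : Ideal (MvPolynomial (Fin (r + 1)) k) :=
  Ideal.span {p | ∃ j < r, p = rel k n r j}

variable {k n r}

theorem aeval_relIdeal {S : Type*} [CommRing S] [IsDomain S] [Algebra k S] (hr : r < n)
    (x : Fin (r + 1) → S) (hx : Function.Injective x) (t : S) (ht : ∀ i, x i ^ n - x i = t)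
    {p : MvPolynomial (Fin (r + 1)) k} (hp : p ∈ relIdeal k n r) : MvPolynomial.aeval x p = 0 := by
  have h1 : relIdeal k n r ≤ RingHom.ker (MvPolynomial.aeval (R := k) x) := by
    rw [relIdeal, Ideal.span_le]
    rintro _ ⟨j, hj, rfl⟩
    rw [SetLike.mem_coe, RingHom.mem_ker, rel, map_sub]
    have h2 := map_hs (MvPolynomial.aeval (R := k) x).toRingHom (rv k r) (j + 1) (n - j - 1)
    rw [AlgHom.toRingHom_eq_coe, RingHom.coe_coe] at h2
    rw [h2]
    have h3 := conv_hs_eq n r hr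
      (fun i => MvPolynomial.aeval (R := k) x (rv k r i)) t ?_ ?_ j (j + 1) (by omega) (by omega)
    · simp only [hs]
      rw [h3]
      split_ifs <;> simp
    · intro i hi l hl h
      simp only [rv, MvPolynomial.aeval_X] at h
      have := congrArg Fin.val (hx h)
      simp at this
      omega
    · intro i hi
      simp only [rv, MvPolynomial.aeval_X]
      exact ht _
  exact h1 hp

/-- The weight `∑ i, (r - i) * α i` driving the reduction to standard monomials. -/
noncomputable def wt (r : ℕ) : (Fin (r + 1) →₀ ℕ) →+ ℕ :=
  Finsupp.weight (fun i : Fin (r + 1) => r - (i : ℕ))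

open scoped Pointwise in
theorem rs_mul_mem {s t u : Set (Fin (r + 1) →₀ ℕ)} (h : ∀ a ∈ s, ∀ b ∈ t, a + b ∈ u)
    {f g : MvPolynomial (Fin (r + 1)) k} (hf : f ∈ MvPolynomial.restrictSupport k s)
    (hg : g ∈ MvPolynomial.restrictSupport k t) : f * g ∈ MvPolynomial.restrictSupport k u := by
  have h1 : f * g ∈ MvPolynomial.restrictSupport k (s + t) := by
    rw [MvPolynomial.restrictSupport_add]
    exact Submodule.mul_mem_mul hf hg
  refine MvPolynomial.restrictSupport_mono k ?_ h1
  rintro _ ⟨a, ha, b, hb, rfl⟩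
  exact h a ha b hb

theorem rv_mem (j : ℕ) : rv k r j ∈
    MvPolynomial.restrictSupport k {α | α.degree ≤ 1 ∧ wt r α ≤ j} := by
  rw [rv, MvPolynomial.X]
  refine (MvPolynomial.monomial_mem_restrictSupport k).2 (Or.inl ?_)
  simp [wt, Finsupp.weight_single]
  omega

theorem rv_pow_mem (j m : ℕ) : rv k r j ^ m ∈
    MvPolynomial.restrictSupport k {α | α.degree ≤ m ∧ wt r α ≤ j * m} := by
  induction m with
  | zero =>
    rw [pow_zero]
    exact (MvPolynomial.monomial_mem_restrictSupport k).2 (Or.inl (by simp))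
  | succ m ih =>
    rw [pow_succ]
    refine rs_mul_mem ?_ ih (rv_mem j)
    rintro a ⟨ha, ha'⟩ b ⟨hb, hb'⟩
    simp only [Set.mem_ofPred_eq, map_add]
    constructor
    · omega
    · rw [mul_add]; omega

theorem hs_mem (j : ℕ) : ∀ m, hs (rv k r) j m ∈
    MvPolynomial.restrictSupport k {α | α.degree ≤ m ∧ wt r α ≤ j * m} := by
  induction j with
  | zero => exact fun m => rv_pow_mem 0 m
  | succ j ih =>
    intro m
    induction m with
    | zero => simpa [hs, conv] using ih 0
    | succ m ihm =>
      have h1 : hs (rv k r) (j + 1) (m + 1) =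
        hs (rv k r) j (m + 1) + rv k r (j + 1) * hs (rv k r) (j + 1) m := rfl
      rw [h1]
      refine add_mem (MvPolynomial.restrictSupport_mono k ?_ (ih (m + 1)))
        (rs_mul_mem ?_ (rv_mem (j + 1)) ihm)
      · rintro a ⟨ha, ha'⟩
        exact ⟨ha, ha'.trans (by gcongr; omega)⟩
      · rintro a ⟨ha, ha'⟩ b ⟨hb, hb'⟩
        simp only [Set.mem_ofPred_eq, map_add]
        constructor
        · omega
        · rw [mul_add]; omega

theorem hs_zero {R : Type*} [CommRing R] (v : ℕ → R) (j : ℕ) : hs v j 0 = 1 := by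
  induction j with
  | zero => simp [hs]
  | succ j ih => simpa [hs, conv] using ih

theorem hs_sub_mem (j : ℕ) : ∀ m, hs (rv k r) (j + 1) m - rv k r (j + 1) ^ m ∈
    MvPolynomial.restrictSupport k {α | α.degree ≤ m ∧ wt r α < (j + 1) * m} := by
  intro m
  induction m with
  | zero => rw [hs_zero]; simp
  | succ m ihm =>
    have h1 : hs (rv k r) (j + 1) (m + 1) - rv k r (j + 1) ^ (m + 1) =
      hs (rv k r) j (m + 1) + rv k r (j + 1) * (hs (rv k r) (j + 1) m - rv k r (j + 1) ^ m) := by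
      have h2 : hs (rv k r) (j + 1) (m + 1) =
        hs (rv k r) j (m + 1) + rv k r (j + 1) * hs (rv k r) (j + 1) m := rfl
      rw [h2]; ring
    rw [h1]
    refine add_mem (MvPolynomial.restrictSupport_mono k ?_ (hs_mem j (m + 1)))
      (rs_mul_mem ?_ (rv_mem (j + 1)) ihm)
    · rintro a ⟨ha, ha'⟩
      refine ⟨ha, lt_of_le_of_lt ha' ?_⟩
      rw [add_mul]; omega
    · rintro a ⟨ha, ha'⟩ b ⟨hb, hb'⟩
      simp only [Set.mem_ofPred_eq, map_add]
      constructor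
      · omega
      · rw [mul_add]; omega

/-- Modulo the relations every polynomial is a combination of standard monomials, without
increasing the degree. The proof is by induction on the weight `wt`, which replacing a leading
monomial decreases. -/
theorem reduce (hr : r < n) (w e : ℕ) :
    MvPolynomial.restrictSupport k {α : Fin (r + 1) →₀ ℕ | α.degree ≤ e ∧ wt r α < w} ≤
      MvPolynomial.restrictSupport k {α | Box n r α ∧ α.degree ≤ e} ⊔
        (relIdeal k n r).restrictScalars k := by
  induction w with
  | zero =>
    rw [MvPolynomial.restrictSupport_eq_span, Submodule.span_le]
    rintro _ ⟨α, ⟨_, h⟩, rfl⟩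
    omega
  | succ w ih =>
    rw [MvPolynomial.restrictSupport_eq_span, Submodule.span_le]
    rintro _ ⟨α, ⟨he, hw⟩, rfl⟩
    by_cases hB : Box n r α
    · exact Submodule.mem_sup_left
        ((MvPolynomial.monomial_mem_restrictSupport k).2 (Or.inl ⟨hB, he⟩))
    · simp only [Box, not_forall, not_lt] at hB
      obtain ⟨i, hi⟩ := hB
      obtain ⟨j, hj⟩ : ∃ j, r = i + (j + 1) := ⟨r - i - 1, by omega⟩
      have hle : Finsupp.single i.castSucc (n - j - 1) ≤ α := by
        rw [Finsupp.single_le_iff]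
        omega
      obtain ⟨γ, rfl⟩ := exists_add_of_le hle
      have hX : rv k r (j + 1) = MvPolynomial.X i.castSucc := by
        rw [rv]; congr 1; ext; simp; omega
      have hmon : MvPolynomial.monomial (Finsupp.single i.castSucc (n - j - 1) + γ) (1 : k) =
          rv k r (j + 1) ^ (n - j - 1) * MvPolynomial.monomial γ 1 := by
        rw [hX, MvPolynomial.X_pow_eq_monomial, MvPolynomial.monomial_mul, one_mul]
      have hdec : MvPolynomial.monomial (Finsupp.single i.castSucc (n - j - 1) + γ) (1 : k) =
          ((if j = 0 then 1 else 0) * MvPolynomial.monomial γ 1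
          - (hs (rv k r) (j + 1) (n - j - 1) - rv k r (j + 1) ^ (n - j - 1))
            * MvPolynomial.monomial γ 1)
          + MvPolynomial.monomial γ 1 * rel k n r j := by
        rw [hmon, rel]; ring
      have hwt : wt r (Finsupp.single i.castSucc (n - j - 1)) = (j + 1) * (n - j - 1) := by
        rw [wt, Finsupp.weight_single, smul_eq_mul, mul_comm]
        congr 1
        simp; omega
      simp only [map_add, hwt, Finsupp.degree_single] at he hw
      have hpos : 0 < (j + 1) * (n - j - 1) := Nat.mul_pos (by omega) (by omega)
      rw [SetLike.mem_coe]
      beta_reduce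
      rw [hdec]
      refine add_mem (ih (sub_mem ?_ ?_)) ?_
      · split_ifs
        · rw [one_mul]
          exact (MvPolynomial.monomial_mem_restrictSupport k).2 (Or.inl ⟨by omega, by omega⟩)
        · rw [zero_mul]; exact zero_mem _
      · refine rs_mul_mem (t := {γ}) ?_ (hs_sub_mem j (n - j - 1))
          ((MvPolynomial.monomial_mem_restrictSupport k).2 (Or.inl rfl))
        rintro a ⟨ha, ha'⟩ b rfl
        simp only [Set.mem_ofPred_eq, map_add]
        omega
      · refine Submodule.mem_sup_right ?_
        rw [Submodule.restrictScalars_mem]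
        exact Ideal.mul_mem_left _ _ (Ideal.subset_span ⟨j, by omega, rfl⟩)

/-- Every polynomial of degree at most `e` agrees modulo the relations with a combination of
standard monomials of degree at most `e`. -/
theorem exists_reduced (hr : r < n) (e : ℕ) {p : MvPolynomial (Fin (r + 1)) k}
    (hp : p ∈ MvPolynomial.restrictSupport k {α : Fin (r + 1) →₀ ℕ | α.degree ≤ e}) :
    ∃ b ∈ MvPolynomial.restrictSupport k {α : Fin (r + 1) →₀ ℕ | Box n r α ∧ α.degree ≤ e},
      p - b ∈ relIdeal k n r := by
  have h1 : p ∈ MvPolynomial.restrictSupport k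
      {α : Fin (r + 1) →₀ ℕ | α.degree ≤ e ∧ wt r α < p.support.sup (wt r) + 1} := by
    rw [MvPolynomial.mem_restrictSupport_iff] at hp ⊢
    intro α hα
    exact ⟨hp hα, Nat.lt_succ_of_le (Finset.le_sup (f := wt r) hα)⟩
  obtain ⟨b, hb, c, hc, h⟩ := Submodule.mem_sup.1 (reduce hr _ _ h1)
  refine ⟨b, hb, ?_⟩
  rw [← h, add_sub_cancel_left]
  exact hc

end Red

namespace RootData
variable {k : Type*} [Field k] {n r : ℕ} (D : RootData k n)

/-- Relations between distinct roots `y i` specialise to any tuple of distinct elements of a domain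
on which `Y ^ n - Y` is constant. -/
theorem aeval_eq_zero_of_good [IsAlgClosed k] (hn : (n : k) ≠ 0) (w : Fin (r + 1) → Fin n)
    (hw : Function.Injective w) (H : MvPolynomial (Fin (r + 1)) k)
    (h0 : MvPolynomial.aeval (fun i => D.y (w i)) H = 0)
    {S : Type*} [CommRing S] [IsDomain S] [Algebra k S]
    (x : Fin (r + 1) → S) (hx : Function.Injective x) (t : S) (ht : ∀ i, x i ^ n - x i = t) :
    MvPolynomial.aeval x H = 0 := by
  have hr : r < n := by
    have := Fintype.card_le_of_injective w hw
    simp only [Fintype.card_fin] at this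
    omega
  obtain ⟨b, hb, hJ⟩ := exists_reduced (n := n) hr (H.support.sup Finsupp.degree) (p := H) (by
    rw [MvPolynomial.mem_restrictSupport_iff]
    exact fun α hα => Finset.le_sup (f := Finsupp.degree) hα)
  have h1 := aeval_relIdeal hr (fun i => D.y (w i)) (D.inj.comp hw) (-D.t)
    (fun i => by linear_combination D.root (w i)) hJ
  rw [map_sub, h0, zero_sub, neg_eq_zero] at h1
  have hb0 : b = 0 := D.box_indep hn r w hw b
    (fun α hα => ((MvPolynomial.mem_restrictSupport_iff k).1 hb hα).1) h1
  rw [hb0, sub_zero] at hJ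
  exact aeval_relIdeal hr x hx t ht hJ

end RootData
end Trinomial

/-! ### Hilbert function and counting of zeros -/

namespace Trinomial
open scoped PowerSeries

/-- Exponents of standard monomials of degree at most `m`. -/
def boxSet (n r m : ℕ) : Set (Fin (r + 1) →₀ ℕ) := {α | Box n r α ∧ α.degree ≤ m}

/-- Number of standard monomials of degree at most `m`. -/
noncomputable def boxCard (n r m : ℕ) : ℕ := Nat.card (boxSet n r m)

/-- The first `r` exponents of a standard monomial. -/
abbrev Head (n r : ℕ) : Type := (i : Fin r) → Fin (n - r + i)

/-- `∏ i < r, (n - r + i)`: the growth rate of `boxCard n r`. -/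
def bd (n r : ℕ) : ℕ := ∏ i : Fin r, (n - r + i)

/-- `∑ i < r, (n - r + i - 1)`: the largest degree of the first `r` exponents. -/
def bD (n r : ℕ) : ℕ := ∑ i : Fin r, (n - r + i - 1)

theorem boxCard_eq (n r m : ℕ) (hr : r < n) :
    boxCard n r m = ∑ β : Head n r, (m + 1 - ∑ i, (β i : ℕ)) := by
  let f : (Σ β : Head n r, Fin (m + 1 - ∑ i, (β i : ℕ))) → boxSet n r m := fun p =>
    ⟨Finsupp.equivFunOnFinite.symm (Fin.snoc (fun i => (p.1 i : ℕ)) (p.2 : ℕ)), by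
      constructor
      · intro i
        have := (p.1 i).2
        simp
        omega
      · have := p.2.2
        rw [Finsupp.degree_eq_sum, Fin.sum_univ_castSucc]
        simp
        omega⟩
  have hf : Function.Bijective f := by
    constructor
    · rintro ⟨β, c⟩ ⟨β', c'⟩ h
      have h1 := congrArg Subtype.val h
      have h2 := Finsupp.equivFunOnFinite.symm.injective h1
      have h3 : β = β' := by
        funext i
        ext
        have := congrFun h2 i.castSucc
        simpa using this
      subst h3
      have h4 : c = c' := by
        ext
        have := congrFun h2 (Fin.last r)
        simpa using this
      rw [h4]
    · rintro ⟨α, hα, hdeg⟩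
      rw [Finsupp.degree_eq_sum, Fin.sum_univ_castSucc] at hdeg
      refine ⟨⟨fun i => ⟨α i.castSucc, ?_⟩, ⟨α (Fin.last r), ?_⟩⟩, ?_⟩
      · have := hα i
        omega
      · simp only
        omega
      · apply Subtype.ext
        ext i
        refine Fin.lastCases ?_ (fun j => ?_) i
        · simp [f]
        · simp [f]
  rw [boxCard, ← Nat.card_congr (Equiv.ofBijective f hf), Nat.card_eq_fintype_card, Fintype.card_sigma]
  simp

theorem finite_boxSet (n r m : ℕ) : (boxSet n r m).Finite := by
  refine Set.Finite.subset (Finsupp.finite_of_degree_le (σ := Fin (r + 1)) m) ?_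
  exact fun α hα => hα.2

theorem card_head (n r : ℕ) : Fintype.card (Head n r) = bd n r := by
  simp [Head, bd]

theorem sum_head (n r : ℕ) (hr : r < n) :
    2 * ∑ β : Head n r, ∑ i, (β i : ℕ) = bd n r * bD n r := by
  have h1 : ∑ β : Head n r, ∑ i, (β i : ℕ) = ∑ β : Head n r, ∑ i, ((β i).rev : ℕ) :=
    Fintype.sum_equiv (Equiv.piCongrRight fun i => Fin.revPerm) _ _ (by intro β; simp)
  rw [two_mul]
  nth_rewrite 2 [h1]
  rw [← Finset.sum_add_distrib]
  have h2 : ∀ β : Head n r, ∑ i, (β i : ℕ) + ∑ i, ((β i).rev : ℕ) = bD n r := by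
    intro β
    rw [← Finset.sum_add_distrib, bD]
    refine Finset.sum_congr rfl fun i _ => ?_
    have := (β i).2
    rw [Fin.val_rev]
    omega
  simp_rw [h2]
  rw [Finset.sum_const, Finset.card_univ, card_head, smul_eq_mul]

theorem boxCard_le (n r m : ℕ) (hr : r < n) : boxCard n r m ≤ bd n r * (m + 1) := by
  rw [boxCard_eq n r m hr, ← card_head]
  calc _ ≤ ∑ β : Head n r, (m + 1) := Finset.sum_le_sum fun β _ => Nat.sub_le _ _
    _ = _ := by rw [Finset.sum_const, Finset.card_univ, smul_eq_mul]

theorem le_boxCard (n r m : ℕ) (hr : r < n) :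
    bd n r * (2 * (m + 1)) ≤ 2 * boxCard n r m + bd n r * bD n r := by
  rw [boxCard_eq n r m hr, ← sum_head n r hr, ← mul_add, ← Finset.sum_add_distrib, mul_left_comm]
  refine Nat.mul_le_mul_left _ ?_
  calc bd n r * (m + 1) = ∑ β : Head n r, (m + 1) := by
        rw [Finset.sum_const, Finset.card_univ, smul_eq_mul, card_head]
    _ ≤ _ := Finset.sum_le_sum fun β _ => by omega

/-- Polynomials of degree at most `m`. -/
noncomputable def degLE (k : Type*) [Field k] (r m : ℕ) : Submodule k (MvPolynomial (Fin (r + 1)) k) :=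
  MvPolynomial.restrictSupport k {α | α.degree ≤ m}

section Dim
variable {k : Type*} [Field k] {n r : ℕ} {A : Type*} [CommRing A] [IsDomain A] [Algebra k A]
  (φ : MvPolynomial (Fin (r + 1)) k →ₐ[k] A)

theorem degLE_mono {l m : ℕ} (h : l ≤ m) : degLE k r l ≤ degLE k r m :=
  MvPolynomial.restrictSupport_mono k fun _ ha => le_trans ha h

theorem degLE_mul {l m : ℕ} {f g : MvPolynomial (Fin (r + 1)) k} (hf : f ∈ degLE k r l)
    (hg : g ∈ degLE k r m) : f * g ∈ degLE k r (l + m) :=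
  rs_mul_mem (fun a ha b hb => by
    simp only [Set.mem_ofPred_eq, map_add] at *; omega) hf hg

theorem exists_mem_degLE (f : MvPolynomial (Fin (r + 1)) k) : ∃ m, f ∈ degLE k r m := by
  refine ⟨f.support.sup Finsupp.degree, ?_⟩
  rw [degLE, MvPolynomial.mem_restrictSupport_iff]
  exact fun α hα => Finset.le_sup (f := Finsupp.degree) hα

instance (m : ℕ) : FiniteDimensional k (degLE k r m) := by
  have : Finite ({α : Fin (r + 1) →₀ ℕ | α.degree ≤ m}) := Finsupp.finite_of_degree_le (σ := Fin (r + 1)) m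
  exact Module.Finite.of_basis (MvPolynomial.basisRestrictSupport k {α : Fin (r + 1) →₀ ℕ | α.degree ≤ m})

/-- A bound for the colength of a principal ideal: elements of `A` that are linearly independent
modulo the multiples of `g`, where `g ≠ 0` has degree at most `e`, number at most
`bd n r * (e + bD n r / 2)`. -/
theorem indep_le (hr : r < n) (hφ : Function.Surjective φ)
    (hdim : ∀ m, Module.finrank k ((degLE k r m).map φ.toLinearMap) = boxCard n r m)
    {e : ℕ} {g : A} (hg : g ∈ (degLE k r e).map φ.toLinearMap) (hg0 : g ≠ 0) (s : ℕ) (v : Fin s → A)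
    (hv : ∀ c : Fin s → k, g ∣ ∑ i, c i • v i → c = 0) :
    2 * s ≤ bd n r * (2 * e + bD n r) := by
  obtain ⟨m, hm⟩ : ∃ m, ∀ i, v i ∈ (degLE k r m).map φ.toLinearMap := by
    have h1 : ∀ i, ∃ m, v i ∈ (degLE k r m).map φ.toLinearMap := by
      intro i
      obtain ⟨f, hf⟩ := hφ (v i)
      obtain ⟨m, hm⟩ := exists_mem_degLE f
      exact ⟨m, f, hm, hf⟩
    choose m hm using h1
    refine ⟨Finset.univ.sup m, fun i => ?_⟩
    exact Submodule.map_mono (degLE_mono (Finset.le_sup (f := m) (Finset.mem_univ i))) (hm i)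
  -- compare the dimensions of elements of degree `m` and `m + e`
  let U := (degLE k r (m + e)).map φ.toLinearMap
  let V := (degLE k r m).map φ.toLinearMap
  let T : (Fin s → k) × V →ₗ[k] A :=
    (Fintype.linearCombination k v).coprod ((LinearMap.mulLeft k g).comp V.subtype)
  have hTU : ∀ x, T x ∈ U := by
    rintro ⟨c, x, hx⟩
    simp only [T, LinearMap.coprod_apply, Fintype.linearCombination_apply]
    refine add_mem (Submodule.sum_mem _ fun i _ => Submodule.smul_mem _ _
      (Submodule.map_mono (degLE_mono (by omega)) (hm i))) ?_
    obtain ⟨f, hf, rfl⟩ := hg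
    obtain ⟨f', hf', rfl⟩ := hx
    refine ⟨f' * f, degLE_mul hf' hf, ?_⟩
    simp [mul_comm]
  have hinj : Function.Injective T := by
    rw [← LinearMap.ker_eq_bot, LinearMap.ker_eq_bot']
    rintro ⟨c, x, hx⟩ h0
    simp only [T, LinearMap.coprod_apply, Fintype.linearCombination_apply, LinearMap.comp_apply,
      Submodule.subtype_apply, LinearMap.mulLeft_apply] at h0
    have hc : c = 0 := hv c ⟨-x, by linear_combination h0⟩
    subst hc
    simp only [Pi.zero_apply, zero_smul, Finset.sum_const_zero, zero_add, mul_eq_zero, hg0, false_or] at h0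
    subst h0
    rfl
  have hle : Module.finrank k ((Fin s → k) × V) ≤ Module.finrank k U :=
    LinearMap.finrank_le_finrank_of_injective (f := T.codRestrict U hTU)
      (fun a b h => hinj (congrArg Subtype.val h))
  rw [Module.finrank_prod, Module.finrank_fin_fun, hdim, hdim] at hle
  have h1 := boxCard_le n r (m + e) hr
  have h2 := le_boxCard n r m hr
  nlinarith

/-- Bound for the number of points at which a nonzero element of degree at most `e` vanishes to order
at least `M`. -/
theorem zero_count (hr : r < n) (hφ : Function.Surjective φ)
    (hdim : ∀ m, Module.finrank k ((degLE k r m).map φ.toLinearMap) = boxCard n r m)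
    {e : ℕ} {g : A} (hg : g ∈ (degLE k r e).map φ.toLinearMap) (hg0 : g ≠ 0)
    {ι : Type*} [Fintype ι] (ev : ι → (A →ₐ[k] k)) (hev : Function.Injective ev) (M : ℕ)
    (hM : ∀ i, g ∈ RingHom.ker (ev i) ^ M) :
    2 * (Fintype.card ι * M) ≤ bd n r * (2 * e + bD n r) := by
  rcases Nat.eq_zero_or_pos M with rfl | hMpos
  · simp
  have hnoeth : IsNoetherianRing A := isNoetherianRing_of_surjective _ _ φ.toRingHom hφ
  -- the quotient by `g` is finite dimensional
  let Q := A ⧸ Ideal.span {g}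
  have hrank : Module.rank k Q ≤ ((bd n r * (2 * e + bD n r) / 2 : ℕ) : Cardinal) := by
    refine rank_le fun s hs => ?_
    have h1 : LinearIndependent k (fun i : Fin s.card => ((s.equivFin.symm i : s) : Q)) :=
      hs.comp _ s.equivFin.symm.injective
    choose v hv using fun i : Fin s.card =>
      Ideal.Quotient.mk_surjective (I := Ideal.span {g}) ((s.equivFin.symm i : s) : Q)
    have := indep_le φ hr hφ hdim hg hg0 s.card v (by
      intro c hc
      rw [Fintype.linearIndependent_iff] at h1
      funext i
      refine h1 c ?_ i
      rw [← Ideal.mem_span_singleton, ← Ideal.Quotient.eq_zero_iff_mem, map_sum] at hc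
      rw [← hc]
      refine Finset.sum_congr rfl fun j _ => ?_
      rw [← hv j]
      rfl)
    omega
  have hfin : Module.Finite k Q :=
    Module.rank_lt_aleph0_iff.1 (lt_of_le_of_lt hrank (Cardinal.natCast_lt_aleph0))
  have hfr : 2 * Module.finrank k Q ≤ bd n r * (2 * e + bD n r) := by
    have := Module.finrank_le_of_rank_le hrank
    omega
  refine le_trans (Nat.mul_le_mul_left 2 ?_) hfr
  -- each local factor has dimension at least `M`
  have hfac : ∀ i (j : ℕ), j ≤ M → Module.Finite k (A ⧸ RingHom.ker (ev i) ^ j) ∧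
      j ≤ Module.finrank k (A ⧸ RingHom.ker (ev i) ^ j) := by
    intro i j
    have hfinj : ∀ j ≤ M, Module.Finite k (A ⧸ RingHom.ker (ev i) ^ j) := by
      intro j hj
      have hle : Ideal.span {g} ≤ RingHom.ker (ev i) ^ j := by
        rw [Ideal.span_singleton_le_iff_mem]
        exact Ideal.pow_le_pow_right hj (hM i)
      exact Module.Finite.of_surjective (Ideal.Quotient.factorₐ k hle).toLinearMap
        (Ideal.Quotient.factor_surjective hle)
    induction j with
    | zero => exact fun h => ⟨hfinj 0 h, Nat.zero_le _⟩
    | succ j ih =>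
      intro hj
      refine ⟨hfinj _ hj, ?_⟩
      obtain ⟨_, h2⟩ := ih (by omega)
      have := hfinj _ hj
      have hle : RingHom.ker (ev i) ^ (j + 1) ≤ RingHom.ker (ev i) ^ j :=
        Ideal.pow_le_pow_right (by omega)
      have hne : RingHom.ker (ev i) ^ (j + 1) ≠ RingHom.ker (ev i) ^ j := by
        intro heq
        have hall : ∀ m, RingHom.ker (ev i) ^ j ≤ RingHom.ker (ev i) ^ m := by
          intro m
          induction m with
          | zero => simp
          | succ m ihm =>
            rw [← heq, pow_succ, pow_succ]
            exact Ideal.mul_mono_left ihm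
        have hbot := Ideal.iInf_pow_eq_bot_of_isDomain (RingHom.ker (ev i)) (RingHom.ker_ne_top _)
        have h3 : g ∈ (⊥ : Ideal A) := by
          rw [← hbot, Ideal.mem_iInf]
          exact fun m => hall m (Ideal.pow_le_pow_right (by omega) (hM i))
        exact hg0 h3
      have hlt : Module.finrank k (A ⧸ RingHom.ker (ev i) ^ j) <
          Module.finrank k (A ⧸ RingHom.ker (ev i) ^ (j + 1)) := by
        by_contra hcon
        let T := (Ideal.Quotient.factorₐ k hle).toLinearMap
        have hs : Function.Surjective T := Ideal.Quotient.factor_surjective hle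
        have heq := le_antisymm (LinearMap.finrank_le_finrank_of_surjective hs) (not_lt.1 hcon)
        have hfj := hfinj j (by omega)
        have hi := (LinearMap.injective_iff_surjective_of_finrank_eq_finrank heq.symm).2 hs
        apply hne
        refine le_antisymm hle fun a ha => ?_
        rw [← Ideal.Quotient.eq_zero_iff_mem] at ha ⊢
        apply hi
        rw [map_zero]
        exact ha
      omega
  -- Chinese remainder theorem
  have hcop : Pairwise fun i j => IsCoprime (RingHom.ker (ev i) ^ M) (RingHom.ker (ev j) ^ M) := by
    intro i j hij
    have hmax : ∀ i, (RingHom.ker (ev i)).IsMaximal := fun i =>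
      RingHom.ker_isMaximal_of_surjective _ fun c => ⟨algebraMap k A c, by simp⟩
    refine IsCoprime.pow ?_
    rw [Ideal.isCoprime_iff_sup_eq]
    refine (hmax i).coprime_of_ne (hmax j) fun h => hij (hev ?_)
    ext a
    have h1 : a - algebraMap k A (ev i a) ∈ RingHom.ker (ev i) := by simp [RingHom.mem_ker]
    rw [h, RingHom.mem_ker, map_sub, AlgHom.commutes, sub_eq_zero] at h1
    exact h1.symm
  have hsurj := Ideal.pi_mkQ_surjective (I := fun i => RingHom.ker (ev i) ^ M) hcop
  let T : A →ₗ[k] (∀ i, A ⧸ RingHom.ker (ev i) ^ M) :=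
    LinearMap.pi fun i => (Ideal.Quotient.mkₐ k (RingHom.ker (ev i) ^ M)).toLinearMap
  have hT : Function.Surjective T := hsurj
  let T' : Q →ₗ[k] (∀ i, A ⧸ RingHom.ker (ev i) ^ M) :=
    LinearMap.pi fun i => (Ideal.Quotient.factorₐ k
      ((Ideal.span_singleton_le_iff_mem _).2 (hM i))).toLinearMap
  have hT' : Function.Surjective T' := by
    intro z
    obtain ⟨a, ha⟩ := hT z
    exact ⟨Ideal.Quotient.mk _ a, by rw [← ha]; rfl⟩
  have hfinM := fun i => (hfac i M le_rfl).1
  have h5 := LinearMap.finrank_le_finrank_of_surjective hT'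
  rw [Module.finrank_pi_fintype] at h5
  refine le_trans ?_ h5
  rw [← smul_eq_mul, ← Finset.card_univ, ← Finset.sum_const]
  exact Finset.sum_le_sum fun i _ => (hfac i M le_rfl).2

end Dim
end Trinomial

/-! ### Independence over `q`-th powers -/

namespace Trinomial
open scoped PowerSeries

namespace RootData
variable {k : Type*} [Field k] {n r : ℕ} (D : RootData k n)

/-- The Hilbert function of the coordinate ring `A = k[y (w 0), …, y (w r)]` counts standard
monomials. -/
theorem finrank_map_degLE [IsAlgClosed k] (hn : (n : k) ≠ 0) (w : Fin (r + 1) → Fin n)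
    (hw : Function.Injective w) (hr : r < n)
    {A : Type*} [CommRing A] [Algebra k A] (φ : MvPolynomial (Fin (r + 1)) k →ₐ[k] A)
    (ι : A →ₐ[k] k⟦X⟧) (hι : Function.Injective ι)
    (hιφ : ∀ p, ι (φ p) = MvPolynomial.aeval (fun i => D.y (w i)) p) (m : ℕ) :
    Module.finrank k ((degLE k r m).map φ.toLinearMap) = boxCard n r m := by
  have hmap : (degLE k r m).map φ.toLinearMap =
      (MvPolynomial.restrictSupport k (boxSet n r m)).map φ.toLinearMap := by
    apply le_antisymm
    · rintro _ ⟨p, hp, rfl⟩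
      obtain ⟨b, hb, hJ⟩ := exists_reduced (n := n) hr m hp
      refine ⟨b, hb, ?_⟩
      have h1 := aeval_relIdeal hr (fun i => D.y (w i)) (D.inj.comp hw) (-D.t)
        (fun i => by linear_combination D.root (w i)) hJ
      rw [← hιφ, map_eq_zero_iff _ hι, map_sub, sub_eq_zero] at h1
      exact h1.symm
    · exact Submodule.map_mono (MvPolynomial.restrictSupport_mono k fun α hα => hα.2)
  rw [hmap, ← LinearMap.range_domRestrict, LinearMap.finrank_range_of_inj, boxCard,
    Module.finrank_eq_nat_card_basis (MvPolynomial.basisRestrictSupport k (boxSet n r m))]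
  rw [← LinearMap.ker_eq_bot, LinearMap.ker_eq_bot']
  rintro ⟨p, hp⟩ h0
  have h0' : φ p = 0 := h0
  have := D.box_indep hn r w hw p
    (fun α hα => ((MvPolynomial.mem_restrictSupport_iff k).1 hp hα).1)
    (by rw [← hιφ, h0', map_zero])
  exact Subtype.ext this

/-- A nonzero element of small degree does not vanish to order `q` along the power series branch:
otherwise the powers `1, z, …, z ^ (q - 1)` of a local parameter `z` would be independent modulo it. -/
theorem not_X_pow_dvd (hr : r < n) (w : Fin (r + 1) → Fin n) (i₁ : Fin (r + 1)) (hi₁ : w i₁ = D.i₀)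
    {A : Type*} [CommRing A] [IsDomain A] [Algebra k A] (φ : MvPolynomial (Fin (r + 1)) k →ₐ[k] A)
    (hφ : Function.Surjective φ) (ι : A →ₐ[k] k⟦X⟧)
    (hιφ : ∀ p, ι (φ p) = MvPolynomial.aeval (fun i => D.y (w i)) p)
    (hdim : ∀ m, Module.finrank k ((degLE k r m).map φ.toLinearMap) = boxCard n r m)
    {l q : ℕ} (hlq : bd n r * (2 * l + bD n r) < 2 * q) {u : A}
    (hu : u ∈ (degLE k r l).map φ.toLinearMap) (hu0 : u ≠ 0) :
    ¬ (PowerSeries.X ^ q ∣ ι u) := by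
  intro hdvd
  set η := PowerSeries.constantCoeff (D.y D.i₀) with hη
  set z : A := φ (MvPolynomial.X i₁) - algebraMap k A η with hz
  have hιz : ι z = D.y D.i₀ - PowerSeries.C η := by
    rw [hz, map_sub, hιφ, MvPolynomial.aeval_X, hi₁, AlgHom.commutes]
    rfl
  obtain ⟨h, hh⟩ : PowerSeries.X ∣ ι z := by
    rw [PowerSeries.X_dvd_iff, hιz]
    simp [hη]
  have hh0 : IsUnit h := by
    rw [PowerSeries.isUnit_iff_constantCoeff, isUnit_iff_ne_zero]
    have h1 := congrArg (PowerSeries.coeff 1) hh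
    rw [hιz, PowerSeries.coeff_succ_X_mul 0 h, map_sub, PowerSeries.coeff_C, if_neg one_ne_zero,
      sub_zero] at h1
    rw [← PowerSeries.coeff_zero_eq_constantCoeff_apply, ← h1]
    exact D.coeff_ne
  have key := indep_le φ hr hφ hdim hu hu0 q (fun j => z ^ (j : ℕ)) (by
    intro c hc
    by_contra hne
    let P : k[X] := ∑ j : Fin q, monomial (j : ℕ) (c j)
    have hcoeff : ∀ j : Fin q, P.coeff j = c j := by
      intro j
      simp only [P, finsetSum_coeff, coeff_monomial]
      rw [Finset.sum_eq_single j]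
      · simp
      · intro b _ hb
        rw [if_neg fun h => hb (Fin.ext h)]
      · simp
    have hP0 : P ≠ 0 := by
      intro h
      apply hne
      funext j
      rw [← hcoeff, h]
      simp
    have hdeg : P.degree < q := by
      rw [degree_lt_iff_coeff_zero]
      intro m hm
      simp only [P, finsetSum_coeff, coeff_monomial]
      refine Finset.sum_eq_zero fun j _ => if_neg ?_
      omega
    obtain ⟨P', hP', hnd⟩ := exists_eq_pow_rootMultiplicity_mul_and_not_dvd P hP0 0
    set j := rootMultiplicity 0 P with hj
    have hjq : j < q := by
      have h1 : j ≤ P.natDegree := by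
        classical
        rw [hj, ← count_roots]
        exact (Multiset.count_le_card _ _).trans (card_roots' P)
      have h2 := (natDegree_lt_iff_degree_lt hP0).2 hdeg
      omega
    have hun : IsUnit (aeval (ι z) P') := by
      rw [PowerSeries.isUnit_iff_constantCoeff, isUnit_iff_ne_zero]
      have h1 : PowerSeries.constantCoeff (aeval (ι z) P') = P'.eval 0 := by
        rw [← Polynomial.coe_aeval_eq_eval]
        have h2 : PowerSeries.constantCoeff (ι z) = 0 := by rw [hh]; simp
        rw [aeval_eq_sum_range, map_sum, coe_aeval_eq_eval, eval_eq_sum_range]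
        refine Finset.sum_congr rfl fun i _ => ?_
        rw [← h2]
        simp
      rw [h1]
      intro h
      exact hnd (dvd_iff_isRoot.2 h)
    have hsum : ι (∑ i : Fin q, c i • z ^ (i : ℕ)) = aeval (ι z) P := by
      simp only [P, map_sum, aeval_monomial]
      refine Finset.sum_congr rfl fun i _ => ?_
      rw [map_smul, map_pow, Algebra.smul_def]
    have h3 : PowerSeries.X ^ q ∣ aeval (ι z) P := by
      rw [← hsum]
      exact hdvd.trans (map_dvd ι hc)
    rw [hP', map_mul, map_pow, map_sub, aeval_X, map_zero, map_zero, sub_zero, hh, mul_pow, mul_assoc] at h3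
    rw [← hh] at h3
    rw [((hh0.pow j).mul hun).dvd_mul_right] at h3
    have h4 : q ≤ j := by
      by_contra hlt
      have := (PowerSeries.X_pow_dvd_iff.1 h3) j (by omega)
      simp [PowerSeries.coeff_X_pow] at this
    omega)
  omega

/-- Standard monomials of small degree in the `y i` are linearly independent over the subring of
`q`-th powers of power series. The lowest order terms of a relation would be a nonzero combination of
these monomials over `k` vanishing to order `q`. -/
theorem indep_over_pow [IsAlgClosed k] (hn : (n : k) ≠ 0) (hr : r < n) (w : Fin (r + 1) → Fin n)
    (hw : Function.Injective w) (i₁ : Fin (r + 1)) (hi₁ : w i₁ = D.i₀)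
    {A : Type*} [CommRing A] [IsDomain A] [Algebra k A] (φ : MvPolynomial (Fin (r + 1)) k →ₐ[k] A)
    (hφ : Function.Surjective φ) (ι : A →ₐ[k] k⟦X⟧)
    (hιφ : ∀ p, ι (φ p) = MvPolynomial.aeval (fun i => D.y (w i)) p)
    (hdim : ∀ m, Module.finrank k ((degLE k r m).map φ.toLinearMap) = boxCard n r m)
    (p f : ℕ) [Fact p.Prime] [CharP k p] {l : ℕ}
    (hlq : bd n r * (2 * l + bD n r) < 2 * p ^ f) [Fintype (boxSet n r l)]
    (g : boxSet n r l → k⟦X⟧)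
    (hg : ∑ α, MvPolynomial.aeval (fun i => D.y (w i)) (MvPolynomial.monomial α.1 (1 : k)) * g α ^ p ^ f = 0) :
    g = 0 := by
  classical
  have hchar : CharP k⟦X⟧ p := charP_of_injective_ringHom (f := (PowerSeries.C : k →+* k⟦X⟧))
    PowerSeries.C_injective p
  by_contra hne
  have hex : ∃ s, ∃ α, PowerSeries.coeff s (g α) ≠ 0 := by
    by_contra hcon
    push Not at hcon
    apply hne
    funext α
    ext s
    simpa using hcon s α
  obtain ⟨α₀, hα₀⟩ := Nat.find_spec hex
  set s := Nat.find hex with hs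
  have hdiv : ∀ α, ∃ h, g α = PowerSeries.X ^ s * h := by
    intro α
    refine PowerSeries.X_pow_dvd_iff.2 fun m hm => ?_
    by_contra hc
    exact Nat.find_min hex hm ⟨α, hc⟩
  choose h hh using hdiv
  have h1 : ∀ α, ∃ h', h α = PowerSeries.C (PowerSeries.constantCoeff (h α)) + PowerSeries.X * h' := by
    intro α
    have : PowerSeries.X ∣ h α - PowerSeries.C (PowerSeries.constantCoeff (h α)) := by
      rw [PowerSeries.X_dvd_iff]; simp
    obtain ⟨h', e⟩ := this
    exact ⟨h', by rw [← e]; ring⟩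
  choose h' hh' using h1
  set c : boxSet n r l → k := fun α => PowerSeries.constantCoeff (h α) with hc
  set B : MvPolynomial (Fin (r + 1)) k := ∑ α : boxSet n r l, MvPolynomial.monomial α.1 (c α ^ p ^ f) with hB
  have hBmem : B ∈ MvPolynomial.restrictSupport k (boxSet n r l) :=
    Submodule.sum_mem _ fun α _ => (MvPolynomial.monomial_mem_restrictSupport k).2 (Or.inl α.2)
  have hBcoeff : ∀ α : boxSet n r l, MvPolynomial.coeff α.1 B = c α ^ p ^ f := by
    intro α
    rw [hB, MvPolynomial.coeff_sum, Finset.sum_eq_single α]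
    · simp
    · intro b _ hb
      rw [MvPolynomial.coeff_monomial, if_neg fun h => hb (Subtype.ext h)]
    · simp
  have hcα₀ : c α₀ ≠ 0 := by
    have h2 := hα₀
    rw [hh α₀] at h2
    have h3 := PowerSeries.coeff_X_pow_mul (h α₀) s 0
    rw [zero_add] at h3
    rw [h3] at h2
    simpa [hc] using h2
  have hB0 : B ≠ 0 := by
    intro h0
    have := hBcoeff α₀
    rw [h0, MvPolynomial.coeff_zero] at this
    exact pow_ne_zero _ hcα₀ this.symm
  have hφB : φ B ≠ 0 := by
    intro h0
    exact hB0 (D.box_indep hn r w hw B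
      (fun α hα => ((MvPolynomial.mem_restrictSupport_iff k).1 hBmem hα).1)
      (by rw [← hιφ, h0, map_zero]))
  refine D.not_X_pow_dvd hr w i₁ hi₁ φ hφ ι hιφ hdim hlq (u := φ B)
    ⟨B, MvPolynomial.restrictSupport_mono k (fun α hα => hα.2) hBmem, rfl⟩ hφB ?_
  set Y : boxSet n r l → k⟦X⟧ := fun α =>
    MvPolynomial.aeval (fun i => D.y (w i)) (MvPolynomial.monomial α.1 (1 : k)) with hY
  have h4 : ∑ α, Y α * h α ^ p ^ f = 0 := by
    have h5 : (PowerSeries.X ^ s : k⟦X⟧) ^ p ^ f * ∑ α, Y α * h α ^ p ^ f = 0 := by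
      rw [← hg, Finset.mul_sum]
      refine Finset.sum_congr rfl fun α _ => ?_
      rw [hh α]
      ring
    exact (mul_eq_zero.1 h5).resolve_left (pow_ne_zero _ (pow_ne_zero _ PowerSeries.X_ne_zero))
  have h6 : ι (φ B) = - (PowerSeries.X ^ p ^ f * ∑ α, Y α * h' α ^ p ^ f) := by
    rw [eq_neg_iff_add_eq_zero, ← h4, hιφ, hB, map_sum, Finset.mul_sum, ← Finset.sum_add_distrib]
    refine Finset.sum_congr rfl fun α _ => ?_
    have h7 : h α ^ p ^ f = PowerSeries.C (c α) ^ p ^ f + PowerSeries.X ^ p ^ f * h' α ^ p ^ f := by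
      conv_lhs => rw [hh' α]
      rw [add_pow_char_pow, mul_pow]
    have h8 : MvPolynomial.aeval (fun i => D.y (w i)) (MvPolynomial.monomial α.1 (c α ^ p ^ f)) =
        PowerSeries.C (c α) ^ p ^ f * Y α := by
      simp only [hY, MvPolynomial.aeval_monomial, map_one, one_mul, map_pow]
      rfl
    rw [h7, h8]
    ring
  rw [h6, dvd_neg]
  exact dvd_mul_right _ _

end RootData
end Trinomial

/-! ### Newton type expansion and the auxiliary polynomial -/

namespace Trinomial
open scoped PowerSeries

section Newton
variable (k : Type*) [Field k] (n r : ℕ)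

/-- The derivative of `Y ^ n - Y` at the `i`-th variable. -/
noncomputable def theta (i : Fin (r + 1)) : MvPolynomial (Fin (r + 1)) k :=
  (n : MvPolynomial (Fin (r + 1)) k) * MvPolynomial.X i ^ (n - 1) - 1

/-- The product of the squares `theta j ^ 2` over `j ≠ i`. -/
noncomputable def coTheta (i : Fin (r + 1)) : MvPolynomial (Fin (r + 1)) k :=
  ∏ j ∈ Finset.univ.erase i, theta k n r j ^ 2

/-- Coefficient of `ε ^ (t + 2)` in the fixed point equation for `ε = (Y - Z) / theta`. -/
noncomputable def cf (i : Fin (r + 1)) (t : ℕ) : MvPolynomial (Fin (r + 1)) k :=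
  (n.choose (t + 2) : MvPolynomial (Fin (r + 1)) k) * MvPolynomial.X i ^ (n - (t + 2)) * theta k n r i ^ t

/-- Approximate solutions, as polynomials in a parameter `T`, of
`ε + ∑ t, cf t * ε ^ (t + 2) = coTheta * T`, obtained by fixed point iteration. -/
noncomputable def it (i : Fin (r + 1)) : ℕ → (MvPolynomial (Fin (r + 1)) k)[X]
  | 0 => 0
  | s + 1 => C (coTheta k n r i) * X -
      ∑ t ∈ Finset.range (n - 1), C (cf k n r i t) * it i s ^ (t + 2)

/-- The resulting approximation of the point near the `i`-th variable at which the value of `Y ^ n - Y`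
has changed by `T * ∏ j, theta j ^ 2`. -/
noncomputable def xi (M : ℕ) (i : Fin (r + 1)) : (MvPolynomial (Fin (r + 1)) k)[X] :=
  C (MvPolynomial.X i) + C (theta k n r i) * it k n r i M

/-- The auxiliary polynomial `∑ α, xi ^ α * u α`. -/
noncomputable def auxPoly {ι : Type*} [Fintype ι] (α : ι → Fin (r + 1) →₀ ℕ) (M : ℕ)
    (u : ι → MvPolynomial (Fin (r + 1)) k) : (MvPolynomial (Fin (r + 1)) k)[X] :=
  ∑ a, (∏ i, xi k n r M i ^ α a i) * C (u a)

variable {k n r}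

theorem pow_succ_sub_mem {B : Type*} [CommRing B] {P : Ideal B} {s : ℕ} {x y : B} (hx : x ∈ P) (hy : y ∈ P)
    (hxy : x - y ∈ P ^ s) (t : ℕ) : x ^ (t + 2) - y ^ (t + 2) ∈ P ^ (s + 1) := by
  have h1 : x ^ (t + 2) - y ^ (t + 2) = (x - y) * x ^ (t + 1) + (x ^ (t + 1) - y ^ (t + 1)) * y := by
    ring
  rw [h1, pow_succ]
  refine add_mem (Ideal.mul_mem_mul hxy ?_) (Ideal.mul_mem_mul ?_ hy)
  · rw [pow_succ]; exact Ideal.mul_mem_left _ _ hx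
  · exact Ideal.mem_of_dvd _ (sub_dvd_pow_sub_pow x y (t + 1)) hxy

theorem binom_expand {B : Type*} [CommRing B] (hn : 2 ≤ n) (z θ ε : B) :
    (z + θ * ε) ^ n = z ^ n + n * z ^ (n - 1) * (θ * ε) +
      θ ^ 2 * ∑ t ∈ Finset.range (n - 1), (n.choose (t + 2) * z ^ (n - (t + 2)) * θ ^ t) * ε ^ (t + 2) := by
  obtain ⟨N, rfl⟩ : ∃ N, n = N + 2 := ⟨n - 2, by omega⟩
  rw [add_comm z, add_pow, Finset.sum_range_succ', Finset.sum_range_succ', Finset.mul_sum]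
  have h1 : N + 2 - 1 = N + 1 := by omega
  rw [h1]
  have h2 : ∀ t ∈ Finset.range (N + 1), (θ * ε) ^ (t + 1 + 1) * z ^ (N + 2 - (t + 1 + 1)) *
      ((N + 2).choose (t + 1 + 1) : B) =
      θ ^ 2 * ((((N + 2).choose (t + 2) : B) * z ^ (N + 2 - (t + 2)) * θ ^ t) * ε ^ (t + 2)) := by
    intro t _
    ring
  rw [Finset.sum_congr rfl h2]
  simp
  ring

/-- Modulo `P ^ M` the points `y` and `z`, which agree modulo `P`, are related by the Newton type
iteration, so that vanishing of the low coefficients of the auxiliary polynomial at `z` forces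
vanishing of the auxiliary function to order `M`. -/
theorem aux_mem_pow {A : Type*} [CommRing A] [Algebra k A] (hn : 2 ≤ n) (P : Ideal A) (M : ℕ)
    (y z : Fin (r + 1) → A) (Δ : A) (hΔ : Δ ∈ P) (hyz : ∀ i, y i - z i ∈ P)
    (heq : ∀ i, (y i ^ n - y i) - (z i ^ n - z i) = Δ)
    (hunit : ∀ i, ∃ c, c * MvPolynomial.aeval z (theta k n r i) - 1 ∈ P)
    {ι : Type*} [Fintype ι] (α : ι → Fin (r + 1) →₀ ℕ) (u : ι → MvPolynomial (Fin (r + 1)) k)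
    (hlow : ∀ j < M, MvPolynomial.aeval z ((auxPoly k n r α M u).coeff j) = 0) :
    ∑ a, (∏ i, y i ^ α a i) * MvPolynomial.aeval z (u a) ∈ P ^ M := by
  rw [← Ideal.Quotient.eq_zero_iff_mem]
  set π := Ideal.Quotient.mk (P ^ M) with hπ
  set Q := P.map π with hQ
  have hQM : Q ^ M = ⊥ := by rw [hQ, ← Ideal.map_pow, hπ, Ideal.map_quotient_self]
  have hPQ : ∀ a ∈ P, π a ∈ Q := fun a ha => Ideal.mem_map_of_mem _ ha
  let ψ : MvPolynomial (Fin (r + 1)) k →+* A ⧸ P ^ M :=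
    π.comp (MvPolynomial.aeval (R := k) z).toRingHom
  have hψX : ∀ i, ψ (MvPolynomial.X i) = π (z i) := by
    intro i; simp [ψ]
  have hu : ∀ i, ∃ τ, τ * ψ (theta k n r i) = 1 := by
    intro i
    obtain ⟨c, hc⟩ := hunit i
    have hnil : IsNilpotent (π c * ψ (theta k n r i) - 1) := by
      refine ⟨M, ?_⟩
      have h1 : (π c * ψ (theta k n r i) - 1) = π (c * MvPolynomial.aeval z (theta k n r i) - 1) := by
        simp [ψ]
      rw [h1, ← Ideal.mem_bot, ← hQM]
      exact Ideal.pow_mem_pow (hPQ _ hc) M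
    have h2 := hnil.isUnit_add_one
    rw [sub_add_cancel] at h2
    obtain ⟨v, hv⟩ := h2
    refine ⟨↑v⁻¹ * π c, ?_⟩
    rw [mul_assoc, ← hv, Units.inv_mul]
  choose τ hτ using hu
  -- `τ i` is the inverse of `theta i` modulo `P ^ M`
  set T : A ⧸ P ^ M := π Δ * ∏ j, τ j ^ 2 with hT
  let E : (MvPolynomial (Fin (r + 1)) k)[X] →+* A ⧸ P ^ M := eval₂RingHom ψ T
  have hEC : ∀ p, E (C p) = ψ p := fun p => by simp [E]
  have hEX : E X = T := by simp [E]
  set ε : Fin (r + 1) → A ⧸ P ^ M := fun i => (π (y i) - π (z i)) * τ i with hε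
  have hεQ : ∀ i, ε i ∈ Q := by
    intro i
    refine Ideal.mul_mem_right _ _ ?_
    rw [← map_sub]
    exact hPQ _ (hyz i)
  have hyε : ∀ i, π (y i) = π (z i) + ψ (theta k n r i) * ε i := by
    intro i
    linear_combination (π (z i) - π (y i)) * hτ i
  have hEY : ∀ i, E (C (coTheta k n r i) * X) = π Δ * τ i ^ 2 := by
    intro i
    rw [map_mul, hEC, hEX, hT, coTheta, map_prod, ← Finset.mul_prod_erase Finset.univ _ (Finset.mem_univ i)]
    have h1 : (∏ j ∈ Finset.univ.erase i, ψ (theta k n r j ^ 2)) * ∏ j ∈ Finset.univ.erase i, τ j ^ 2 = 1 := by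
      rw [← Finset.prod_mul_distrib]
      refine Finset.prod_eq_one fun j _ => ?_
      rw [map_pow, ← mul_pow, mul_comm, hτ, one_pow]
    linear_combination (π Δ * τ i ^ 2) * h1
  -- `ε i` is a fixed point of the iteration defining `it`, which contracts `Q`-adically
  have hfix : ∀ i, ε i = π Δ * τ i ^ 2 -
      ∑ t ∈ Finset.range (n - 1), ψ (cf k n r i t) * ε i ^ (t + 2) := by
    intro i
    have h1 := congrArg π (heq i)
    simp only [map_sub, map_pow] at h1
    have h2 := binom_expand hn (π (z i)) (ψ (theta k n r i)) (ε i)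
    rw [← hyε] at h2
    have h3 : ∀ t, ψ (cf k n r i t) =
        (n.choose (t + 2) : A ⧸ P ^ M) * π (z i) ^ (n - (t + 2)) * ψ (theta k n r i) ^ t := by
      intro t
      simp only [cf, map_mul, map_pow, map_natCast, hψX]
    simp_rw [h3]
    set Sg := ∑ t ∈ Finset.range (n - 1),
      (n.choose (t + 2) : A ⧸ P ^ M) * π (z i) ^ (n - (t + 2)) * ψ (theta k n r i) ^ t * ε i ^ (t + 2)
    have h4 : ψ (theta k n r i) = n * π (z i) ^ (n - 1) - 1 := by
      simp only [theta, map_sub, map_mul, map_pow, map_natCast, hψX, map_one]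
    have h5 : ψ (theta k n r i) ^ 2 * (ε i + Sg) = π Δ := by
      linear_combination h1 - h2 + hyε i + ψ (theta k n r i) * ε i * h4
    have h6 : (τ i ^ 2 * ψ (theta k n r i) ^ 2) = 1 := by rw [← mul_pow, hτ, one_pow]
    linear_combination τ i ^ 2 * h5 - (ε i + Sg) * h6
  have hiter : ∀ i s, E (it k n r i s) - ε i ∈ Q ^ (s + 1) := by
    intro i s
    induction s with
    | zero =>
      simp only [it, map_zero, zero_sub, zero_add, pow_one]
      exact neg_mem (hεQ i)
    | succ s ih =>
      rw [it, map_sub, hEY, map_sum]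
      have h1 : π Δ * τ i ^ 2 - ∑ t ∈ Finset.range (n - 1), E (C (cf k n r i t) * it k n r i s ^ (t + 2)) - ε i =
          - ∑ t ∈ Finset.range (n - 1), ψ (cf k n r i t) * (E (it k n r i s) ^ (t + 2) - ε i ^ (t + 2)) := by
        simp only [map_mul, map_pow, hEC, mul_sub, Finset.sum_sub_distrib]
        linear_combination -hfix i
      rw [h1]
      refine neg_mem (Ideal.sum_mem _ fun t _ => Ideal.mul_mem_left _ _ ?_)
      refine pow_succ_sub_mem ?_ (hεQ i) ih t
      have h2 : E (it k n r i s) = (E (it k n r i s) - ε i) + ε i := by ring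
      rw [h2]
      exact add_mem (Ideal.pow_le_self (by omega) ih) (hεQ i)
  have hExi : ∀ i, E (xi k n r M i) = π (y i) := by
    intro i
    have h1 : E (it k n r i M) - ε i = 0 := by
      rw [← Ideal.mem_bot, ← hQM]
      exact Ideal.pow_le_pow_right (by omega) (hiter i M)
    rw [xi, map_add, map_mul, hEC, hEC, hψX, hyε, sub_eq_zero.1 h1]
  have hG : E (auxPoly k n r α M u) = π (∑ a, (∏ i, y i ^ α a i) * MvPolynomial.aeval z (u a)) := by
    rw [auxPoly, map_sum, map_sum]
    refine Finset.sum_congr rfl fun a _ => ?_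
    simp only [map_mul, map_prod, map_pow, hExi, hEC]
    rfl
  rw [← hG]
  change eval₂ ψ T (auxPoly k n r α M u) = 0
  rw [eval₂_eq_sum_range]
  refine Finset.sum_eq_zero fun j _ => ?_
  rcases lt_or_ge j M with hj | hj
  · have : ψ ((auxPoly k n r α M u).coeff j) = 0 := by
      change π (MvPolynomial.aeval z ((auxPoly k n r α M u).coeff j)) = 0
      rw [hlow j hj, map_zero]
    rw [this, zero_mul]
  · have : T ^ j = 0 := by
      rw [← Ideal.mem_bot, ← hQM]
      refine Ideal.pow_le_pow_right hj (Ideal.pow_mem_pow ?_ j)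
      exact Ideal.mul_mem_right _ _ (hPQ _ hΔ)
    rw [this, mul_zero]

/-- Polynomials in `T` whose coefficient of `T ^ j` has degree at most `e + c * j`. -/
noncomputable def wDeg (k : Type*) [Field k] (r : ℕ) (c : ℕ) (e : ℤ) :
    Submodule k (MvPolynomial (Fin (r + 1)) k)[X] where
  carrier := {g | ∀ j : ℕ, g.coeff j ∈ MvPolynomial.restrictSupport k {α | (α.degree : ℤ) ≤ e + c * j}}
  zero_mem' := fun j => by rw [coeff_zero]; exact zero_mem _
  add_mem' := fun ha hb j => by rw [coeff_add]; exact add_mem (ha j) (hb j)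
  smul_mem' := fun a g hg j => by rw [coeff_smul]; exact Submodule.smul_mem _ _ (hg j)

theorem wDeg_mono {c : ℕ} {e e' : ℤ} (h : e ≤ e') : wDeg k r c e ≤ wDeg k r c e' := fun _ hg j =>
  MvPolynomial.restrictSupport_mono k (fun a ha => by
    simp only [Set.mem_ofPred_eq] at *; linarith) (hg j)

theorem wDeg_mul {c : ℕ} {e e' : ℤ} {f g : (MvPolynomial (Fin (r + 1)) k)[X]} (hf : f ∈ wDeg k r c e)
    (hg : g ∈ wDeg k r c e') : f * g ∈ wDeg k r c (e + e') := by
  intro j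
  rw [coeff_mul]
  refine Submodule.sum_mem _ fun x hx => rs_mul_mem ?_ (hf x.1) (hg x.2)
  intro a ha b hb
  have := Finset.HasAntidiagonal.mem_antidiagonal.1 hx
  simp only [Set.mem_ofPred_eq, map_add, Nat.cast_add] at *
  rw [← this]
  push_cast
  linarith

theorem wDeg_C {c m : ℕ} {p : MvPolynomial (Fin (r + 1)) k} (hp : p ∈ degLE k r m) :
    C p ∈ wDeg k r c m := by
  intro j
  rw [coeff_C]
  split_ifs with h
  · refine MvPolynomial.restrictSupport_mono k (fun a ha => ?_) hp
    simp only [Set.mem_ofPred_eq] at *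
    subst h
    push_cast
    omega
  · exact zero_mem _

theorem one_mem_degLE : (1 : MvPolynomial (Fin (r + 1)) k) ∈ degLE k r 0 :=
  (MvPolynomial.monomial_mem_restrictSupport k).2 (Or.inl (by simp))

theorem wDeg_pow {c : ℕ} {e : ℤ} {f : (MvPolynomial (Fin (r + 1)) k)[X]} (hf : f ∈ wDeg k r c e) (m : ℕ) :
    f ^ m ∈ wDeg k r c (m * e) := by
  induction m with
  | zero =>
    rw [pow_zero, ← C_1]
    simpa using wDeg_C (c := c) (one_mem_degLE (k := k) (r := r))
  | succ m ih =>
    rw [pow_succ]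
    exact wDeg_mono (by push_cast; linarith) (wDeg_mul ih hf)

theorem wDeg_prod {c : ℕ} {ι : Type*} (s : Finset ι) (e : ι → ℤ) (f : ι → (MvPolynomial (Fin (r + 1)) k)[X])
    (hf : ∀ i ∈ s, f i ∈ wDeg k r c (e i)) : ∏ i ∈ s, f i ∈ wDeg k r c (∑ i ∈ s, e i) := by
  classical
  induction s using Finset.induction_on with
  | empty =>
    rw [Finset.prod_empty, Finset.sum_empty, ← C_1]
    simpa using wDeg_C (c := c) (one_mem_degLE (k := k) (r := r))
  | insert i s hi ih =>
    rw [Finset.prod_insert hi, Finset.sum_insert hi]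
    exact wDeg_mul (hf i (Finset.mem_insert_self i s)) (ih fun j hj => hf j (Finset.mem_insert_of_mem hj))

theorem degLE_pow {m : ℕ} {p : MvPolynomial (Fin (r + 1)) k} (hp : p ∈ degLE k r m) (t : ℕ) :
    p ^ t ∈ degLE k r (t * m) := by
  induction t with
  | zero => rw [pow_zero, zero_mul]; exact one_mem_degLE
  | succ t ih => rw [pow_succ, add_mul, one_mul]; exact degLE_mul ih hp

theorem X_mem_degLE (i : Fin (r + 1)) : MvPolynomial.X i ∈ degLE k r 1 :=
  (MvPolynomial.monomial_mem_restrictSupport k).2 (Or.inl (by simp))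

theorem natCast_mem_degLE (m : ℕ) : (m : MvPolynomial (Fin (r + 1)) k) ∈ degLE k r 0 := by
  rw [← nsmul_one]
  exact (degLE k r 0).smul_of_tower_mem m one_mem_degLE

theorem theta_mem (i : Fin (r + 1)) : theta k n r i ∈ degLE k r (n - 1) := by
  refine sub_mem ?_ (degLE_mono (Nat.zero_le _) one_mem_degLE)
  have := degLE_mul (natCast_mem_degLE (k := k) (r := r) n) (degLE_pow (X_mem_degLE (k := k) i) (n - 1))
  simpa using this

/-- Growth rate of the degrees of the coefficients in `xi`. -/
def cst (n r : ℕ) : ℕ := 2 * r * (n - 1) + (n - 2)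

theorem coTheta_mem (i : Fin (r + 1)) : coTheta k n r i ∈ degLE k r (2 * r * (n - 1)) := by
  have h : ∀ s : Finset (Fin (r + 1)), ∏ j ∈ s, theta k n r j ^ 2 ∈ degLE k r (s.card * (2 * (n - 1))) := by
    classical
    intro s
    induction s using Finset.induction_on with
    | empty => simpa using one_mem_degLE (k := k) (r := r)
    | insert i s hi ih =>
      rw [Finset.prod_insert hi, Finset.card_insert_of_notMem hi, add_mul, one_mul,
        Nat.add_comm (s.card * _)]
      exact degLE_mul (degLE_pow (theta_mem i) 2) ih
  have h1 := h (Finset.univ.erase i)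
  rw [Finset.card_erase_of_mem (Finset.mem_univ i), Finset.card_univ, Fintype.card_fin,
    Nat.add_sub_cancel] at h1
  have h2 : r * (2 * (n - 1)) = 2 * r * (n - 1) := by ring
  rw [h2] at h1
  exact h1

/-- The negative offset `-(n - 2)` makes the weighted degree bound stable under the iteration. -/
theorem it_mem (hn : 2 ≤ n) (i : Fin (r + 1)) (s : ℕ) :
    it k n r i s ∈ wDeg k r (cst n r) (-((n : ℤ) - 2)) := by
  induction s with
  | zero => exact zero_mem _
  | succ s ih =>
    rw [it]
    refine sub_mem ?_ (Submodule.sum_mem _ fun t ht => ?_)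
    · intro j
      rw [coeff_C_mul, coeff_X]
      split_ifs with h
      · rw [mul_one]
        refine MvPolynomial.restrictSupport_mono k (fun a ha => ?_) (coTheta_mem (k := k) (n := n) i)
        simp only [Set.mem_ofPred_eq] at *
        subst h
        rw [cst]
        push_cast [Nat.cast_sub (show 2 ≤ n by omega), Nat.cast_sub (show 1 ≤ n by omega)]
        have h3 : (a.degree : ℤ) ≤ ((2 * r * (n - 1) : ℕ) : ℤ) := by exact_mod_cast ha
        push_cast [Nat.cast_sub (show 1 ≤ n by omega)] at h3
        linarith
      · rw [mul_zero]; exact zero_mem _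
    · have ht' := Finset.mem_range.1 ht
      have h1 : cf k n r i t ∈ degLE k r (0 + (n - (t + 2)) * 1 + t * (n - 1)) :=
        degLE_mul (degLE_mul (natCast_mem_degLE _) (degLE_pow (X_mem_degLE i) _)) (degLE_pow (theta_mem i) t)
      refine wDeg_mono ?_ (wDeg_mul (wDeg_C h1) (wDeg_pow ih (t + 2)))
      push_cast [Nat.cast_sub (show t + 2 ≤ n by omega), Nat.cast_sub (show 1 ≤ n by omega)]
      apply le_of_eq
      ring

theorem xi_mem (hn : 2 ≤ n) (M : ℕ) (i : Fin (r + 1)) : xi k n r M i ∈ wDeg k r (cst n r) 1 := by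
  refine add_mem (wDeg_C (X_mem_degLE i)) (wDeg_mono ?_ (wDeg_mul (wDeg_C (theta_mem i)) (it_mem hn i M)))
  push_cast [Nat.cast_sub (show 1 ≤ n by omega)]
  linarith

theorem auxPoly_coeff_mem (hn : 2 ≤ n) {ι : Type*} [Fintype ι] (α : ι → Fin (r + 1) →₀ ℕ) (M l m : ℕ)
    (hα : ∀ a, (α a).degree ≤ l) (u : ι → MvPolynomial (Fin (r + 1)) k) (hu : ∀ a, u a ∈ degLE k r m) (j : ℕ) :
    (auxPoly k n r α M u).coeff j ∈ degLE k r (l + m + cst n r * j) := by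
  have h1 : auxPoly k n r α M u ∈ wDeg k r (cst n r) (l + m) := by
    refine Submodule.sum_mem _ fun a _ => wDeg_mul ?_ (wDeg_C (hu a))
    refine wDeg_mono ?_ (wDeg_prod Finset.univ (fun i => (α a i : ℤ)) _ fun i _ => ?_)
    · have := hα a
      rw [Finsupp.degree_eq_sum] at this
      exact_mod_cast this
    · simpa using wDeg_pow (xi_mem (k := k) hn M i) (α a i)
  refine MvPolynomial.restrictSupport_mono k (fun a ha => ?_) (h1 j)
  simp only [Set.mem_ofPred_eq] at *
  exact_mod_cast ha

end Newton
end Trinomial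

/-! ### Stepanov's method -/

namespace Trinomial
open scoped PowerSeries

/-- Raising the coefficients and the arguments of a polynomial to the power `p ^ f` raises its value
to that power. -/
theorem aeval_frob {k S : Type*} [Field k] [CommRing S] [Algebra k S] (p f : ℕ) [Fact p.Prime] [CharP k p]
    [CharP S p] {σ : Type*} (Y : σ → S) (u : MvPolynomial σ k) :
    MvPolynomial.aeval (fun i => Y i ^ p ^ f) (MvPolynomial.map (iterateFrobenius k p f) u) =
      (MvPolynomial.aeval Y u) ^ p ^ f := by
  induction u using MvPolynomial.induction_on with
  | C a => simp [iterateFrobenius_def]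
  | add u v hu hv => rw [map_add, map_add, map_add, hu, hv, add_pow_char_pow]
  | mul_X u i hu => simp only [map_mul, hu, mul_pow, MvPolynomial.map_X, MvPolynomial.aeval_X]

theorem degLE_subst {k : Type*} [Field k] {r : ℕ} (τ : Fin (r + 1) → Fin (r + 1)) (q m : ℕ)
    {p : MvPolynomial (Fin (r + 1)) k} (hp : p ∈ degLE k r m) :
    MvPolynomial.aeval (fun i => (MvPolynomial.X (τ i) : MvPolynomial (Fin (r + 1)) k) ^ q) p ∈
      degLE k r (q * m) := by
  rw [degLE, MvPolynomial.mem_restrictSupport_iff] at hp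
  rw [MvPolynomial.as_sum p, map_sum]
  refine Submodule.sum_mem _ fun α hα => ?_
  rw [MvPolynomial.aeval_monomial, ← Algebra.smul_def]
  refine Submodule.smul_mem _ _ ?_
  rw [Finsupp.prod_fintype _ _ (fun i => pow_zero _)]
  have h : ∀ s : Finset (Fin (r + 1)),
      ∏ i ∈ s, ((MvPolynomial.X (τ i) : MvPolynomial (Fin (r + 1)) k) ^ q) ^ α i ∈
        degLE k r (q * ∑ i ∈ s, α i) := by
    classical
    intro s
    induction s using Finset.induction_on with
    | empty => simpa using one_mem_degLE (k := k) (r := r)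
    | insert i s hi ih =>
      rw [Finset.prod_insert hi, Finset.sum_insert hi, mul_add]
      refine degLE_mul ?_ ih
      rw [← pow_mul]
      simpa using degLE_pow (X_mem_degLE (k := k) (τ i)) (q * α i)
  refine degLE_mono ?_ (h Finset.univ)
  have h2 : α.degree ≤ m := hp hα
  rw [Finsupp.degree_eq_sum] at h2
  exact Nat.mul_le_mul_left q h2

/-- More unknown coefficients than linear conditions: there is a nonzero family `u` for which the
first `M` coefficients of the auxiliary polynomial vanish on the curve. -/
theorem exists_aux {k : Type*} [Field k] {n r : ℕ} (hn : 2 ≤ n)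
    {A : Type*} [CommRing A] [Algebra k A] (φ : MvPolynomial (Fin (r + 1)) k →ₐ[k] A)
    (hdim : ∀ m, Module.finrank k ((degLE k r m).map φ.toLinearMap) = boxCard n r m)
    (l m M : ℕ) [Fintype (boxSet n r l)]
    (hcount : ∑ j : Fin M, boxCard n r (l + m + cst n r * j) < boxCard n r l * boxCard n r m) :
    ∃ u : boxSet n r l → MvPolynomial (Fin (r + 1)) k, u ≠ 0 ∧
      (∀ a, u a ∈ MvPolynomial.restrictSupport k (boxSet n r m)) ∧
      ∀ j < M, φ ((auxPoly k n r (fun a : boxSet n r l => a.1) M u).coeff j) = 0 := by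
  let V := boxSet n r l → MvPolynomial.restrictSupport k (boxSet n r m)
  let U := (j : Fin M) → (degLE k r (l + m + cst n r * j)).map φ.toLinearMap
  have hle : ∀ b ∈ MvPolynomial.restrictSupport k (boxSet n r m), b ∈ degLE k r m := fun b hb =>
    MvPolynomial.restrictSupport_mono k (fun α hα => hα.2) hb
  let T : V →ₗ[k] U :=
    { toFun := fun u j =>
        ⟨φ ((auxPoly k n r (fun a : boxSet n r l => a.1) M fun a => (u a).1).coeff j),
          _, auxPoly_coeff_mem hn _ M l m (fun a => a.2.2) _ (fun a => hle _ (u a).2) j, rfl⟩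
      map_add' := by
        intro u v
        funext j
        apply Subtype.ext
        have : auxPoly k n r (fun a : boxSet n r l => a.1) M (fun a => ((u + v) a).1) =
            auxPoly k n r (fun a : boxSet n r l => a.1) M (fun a => (u a).1) +
              auxPoly k n r (fun a : boxSet n r l => a.1) M (fun a => (v a).1) := by
          rw [auxPoly, auxPoly, auxPoly, ← Finset.sum_add_distrib]
          refine Finset.sum_congr rfl fun a _ => ?_
          rw [← mul_add, ← C_add]
          rfl
        change φ (Polynomial.coeff _ _) = φ _ + φ _
        rw [this, coeff_add, map_add]
      map_smul' := by
        intro c u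
        funext j
        apply Subtype.ext
        have : auxPoly k n r (fun a : boxSet n r l => a.1) M (fun a => ((c • u) a).1) =
            c • auxPoly k n r (fun a : boxSet n r l => a.1) M (fun a => (u a).1) := by
          rw [auxPoly, auxPoly, Finset.smul_sum]
          refine Finset.sum_congr rfl fun a _ => ?_
          rw [← mul_smul_comm, Polynomial.smul_C]
          rfl
        change φ (Polynomial.coeff _ _) = c • φ _
        rw [this, coeff_smul, map_smul] }
  have hfin : Finite (boxSet n r m) := finite_boxSet n r m
  have hfinV : Module.Finite k (MvPolynomial.restrictSupport k (boxSet n r m)) :=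
    Module.Finite.of_basis (MvPolynomial.basisRestrictSupport k (boxSet n r m))
  have hV : Module.finrank k V = boxCard n r l * boxCard n r m := by
    rw [Module.finrank_pi_fintype, Finset.sum_const, Finset.card_univ,
      Module.finrank_eq_nat_card_basis (MvPolynomial.basisRestrictSupport k (boxSet n r m)), boxCard,
      boxCard, ← Nat.card_eq_fintype_card, smul_eq_mul]
  have hU : Module.finrank k U = ∑ j : Fin M, boxCard n r (l + m + cst n r * j) := by
    rw [Module.finrank_pi_fintype]
    exact Finset.sum_congr rfl fun j _ => hdim _
  have hker : LinearMap.ker T ≠ ⊥ := LinearMap.ker_ne_bot_of_finrank_lt (by rw [hU, hV]; exact hcount)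
  obtain ⟨u, hu, hu0⟩ := Submodule.exists_mem_ne_zero_of_ne_bot hker
  refine ⟨fun a => (u a).1, ?_, fun a => (u a).2, fun j hj => ?_⟩
  · intro h
    apply hu0
    funext a
    exact Subtype.ext (congrFun h a)
  · have h1 := congrFun (LinearMap.mem_ker.1 hu) ⟨j, hj⟩
    exact congrArg Subtype.val h1

namespace RootData
variable {k : Type*} [Field k] {n r : ℕ} (D : RootData k n)

/-- Stepanov's argument on a curve with coordinate ring `A`. The function `∑ α, y ^ α * u α (z)`, with
`z i = y (τ i) ^ q`, vanishes to order `M` at the given points because `y` and `z` agree there, and it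
is nonzero because standard monomials are independent over `q`-th powers. -/
theorem stepanov_aux [IsAlgClosed k] (p f : ℕ) [Fact p.Prime] [CharP k p] (hn : (n : k) ≠ 0) (hr : r < n)
    (w : Fin (r + 1) → Fin n) (hw : Function.Injective w) (i₁ : Fin (r + 1)) (hi₁ : w i₁ = D.i₀)
    {A : Type*} [CommRing A] [IsDomain A] [Algebra k A] (φ : MvPolynomial (Fin (r + 1)) k →ₐ[k] A)
    (hφ : Function.Surjective φ) (ι : A →ₐ[k] k⟦X⟧) (hι : Function.Injective ι)
    (hιφ : ∀ p, ι (φ p) = MvPolynomial.aeval (fun i => D.y (w i)) p)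
    (τ : Fin (r + 1) → Fin (r + 1)) (hτ : Function.Injective τ) (l m M : ℕ)
    (hlq : bd n r * (2 * l + bD n r) < 2 * p ^ f)
    (hcount : ∑ j : Fin M, boxCard n r (l + m + cst n r * j) < boxCard n r l * boxCard n r m)
    {Ξ : Type*} [Fintype Ξ] (x : Ξ → Fin (r + 1) → k) (hxinj : Function.Injective x)
    (ev : Ξ → A →ₐ[k] k) (hev : ∀ a p, ev a (φ p) = MvPolynomial.aeval (x a) p)
    (hcrit : ∀ a i, (n : k) * x a i ^ (n - 1) ≠ 1) (hfrob : ∀ a i, x a (τ i) ^ p ^ f = x a i) :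
    2 * (Fintype.card Ξ * M) ≤ bd n r * (2 * (l + p ^ f * m) + bD n r) := by
  have hn2 := D.two_le
  have hdim := D.finrank_map_degLE hn w hw hr φ ι hι hιφ
  have hcharA : CharP A p := charP_of_injective_algebraMap (algebraMap k A).injective p
  have hcharS : CharP k⟦X⟧ p := charP_of_injective_algebraMap (algebraMap k k⟦X⟧).injective p
  let inst : Fintype (boxSet n r l) := (finite_boxSet n r l).fintype
  obtain ⟨u, hu0, humem, hucoeff⟩ := exists_aux hn2 φ hdim l m M hcount
  set q := p ^ f with hq
  have hq0 : q ≠ 0 := pow_ne_zero _ (Fact.out : p.Prime).ne_zero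
  set y : Fin (r + 1) → A := fun i => φ (MvPolynomial.X i) with hy
  set z : Fin (r + 1) → A := fun i => y (τ i) ^ q with hz
  have hιy : ∀ i, ι (y i) = D.y (w i) := by
    intro i; rw [hy]; simp only [hιφ, MvPolynomial.aeval_X]
  have hyinj : Function.Injective y := by
    intro i j hij
    have := congrArg ι hij
    rw [hιy, hιy] at this
    exact hw (D.inj this)
  have hzinj : Function.Injective z := by
    intro i j hij
    exact hτ (hyinj (iterateFrobenius_inj A p f hij))
  set t : A := y 0 ^ n - y 0 with ht
  have hyt : ∀ i, y i ^ n - y i = t := by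
    intro i
    apply hι
    rw [ht, map_sub, map_sub, map_pow, map_pow, hιy, hιy]
    linear_combination D.root (w i) - D.root (w 0)
  have hzt : ∀ i, z i ^ n - z i = t ^ q := by
    intro i
    rw [← hyt (τ i), sub_pow_char_pow, ← pow_mul, ← pow_mul, mul_comm]
  have hyφ : ∀ a : MvPolynomial (Fin (r + 1)) k, MvPolynomial.aeval y a = φ a := by
    intro a
    rw [hy, ← MvPolynomial.comp_aeval_apply]
    simp
  have hzφ : ∀ a : MvPolynomial (Fin (r + 1)) k, MvPolynomial.aeval z a =
      φ (MvPolynomial.aeval (fun i => (MvPolynomial.X (τ i) : MvPolynomial (Fin (r + 1)) k) ^ q) a) := by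
    intro a
    rw [MvPolynomial.comp_aeval_apply]
    simp only [map_pow, hz, hy]
  set g : A := ∑ a : boxSet n r l, (∏ i, y i ^ a.1 i) * MvPolynomial.aeval z (u a) with hg
  have hprod : ∀ a : boxSet n r l, ∏ i, y i ^ a.1 i = φ (MvPolynomial.monomial a.1 1) := by
    intro a
    rw [← hyφ, MvPolynomial.aeval_monomial, map_one, one_mul, Finsupp.prod_fintype _ _ (fun i => pow_zero _)]
  have hgmem : g ∈ (degLE k r (l + q * m)).map φ.toLinearMap := by
    refine Submodule.sum_mem _ fun a _ => ?_
    rw [hprod, hzφ]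
    refine ⟨MvPolynomial.monomial a.1 1 * _, degLE_mul ((MvPolynomial.monomial_mem_restrictSupport k).2 (Or.inl a.2.2))
      (degLE_subst τ q m (MvPolynomial.restrictSupport_mono k (fun α hα => hα.2) (humem a))), ?_⟩
    exact map_mul φ _ _
  have hg0 : g ≠ 0 := by
    intro h0
    let σ := iterateFrobeniusEquiv k p f
    let u' : boxSet n r l → MvPolynomial (Fin (r + 1)) k := fun a =>
      MvPolynomial.map (σ.symm : k →+* k) (u a)
    have hu' : ∀ a, MvPolynomial.map (iterateFrobenius k p f) (u' a) = u a := by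
      intro a
      simp only [u', MvPolynomial.map_map]
      have : (iterateFrobenius k p f).comp (σ.symm : k →+* k) = RingHom.id k := by
        ext c
        simp only [RingHom.comp_apply, RingHom.id_apply]
        exact σ.apply_symm_apply c
      rw [this, MvPolynomial.map_id]
    have h1 := D.indep_over_pow hn hr w hw i₁ hi₁ φ hφ ι hιφ hdim p f hlq
      (fun a => MvPolynomial.aeval (fun i => D.y (w (τ i))) (u' a)) (by
        have h2 := congrArg ι h0
        rw [map_zero, hg, map_sum] at h2
        rw [← h2]
        refine Finset.sum_congr rfl fun a _ => ?_
        rw [map_mul, hprod, hιφ]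
        congr 1
        rw [← aeval_frob, hu', MvPolynomial.comp_aeval_apply]
        simp only [hz, map_pow, hιy, hq])
    apply hu0
    funext a
    have h3 : u' a = 0 := D.box_indep hn r (fun i => w (τ i)) (hw.comp hτ) (u' a) (by
      intro α hα
      have h4 := MvPolynomial.support_map_subset _ _ hα
      exact ((MvPolynomial.mem_restrictSupport_iff k).1 (humem a) h4).1) (congrFun h1 a)
    rw [← hu' a, h3, map_zero]
    rfl
  refine zero_count φ hr hφ hdim hgmem hg0 ev ?_ M ?_
  · intro a b hab
    apply hxinj
    funext i
    have h1 := hev a (MvPolynomial.X i)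
    rw [hab, hev b, MvPolynomial.aeval_X, MvPolynomial.aeval_X] at h1
    exact h1.symm
  · intro a
    have hevy : ∀ i, ev a (y i) = x a i := by
      intro i; rw [hy]; simp only [hev, MvPolynomial.aeval_X]
    have hevz : ∀ i, ev a (z i) = x a i := by
      intro i; rw [hz]; simp only [map_pow, hevy, hfrob]
    refine aux_mem_pow hn2 (RingHom.ker (ev a)) M y z (t - t ^ q) ?_ ?_ ?_ ?_ _ u ?_
    · rw [← hyt 0, ← hzt 0, RingHom.mem_ker]
      simp only [map_sub, map_pow, hevy, hevz, sub_self]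
    · intro i
      rw [RingHom.mem_ker, map_sub, hevy, hevz, sub_self]
    · intro i
      rw [hyt, hzt]
    · intro i
      have h1 : ev a (MvPolynomial.aeval z (theta k n r i)) = n * x a i ^ (n - 1) - 1 := by
        rw [MvPolynomial.comp_aeval_apply]
        simp only [hevz, theta, map_sub, map_mul, map_pow, map_natCast, map_one, MvPolynomial.aeval_X]
      have h2 : (n : k) * x a i ^ (n - 1) - 1 ≠ 0 := sub_ne_zero.2 (hcrit a i)
      refine ⟨algebraMap k A ((n : k) * x a i ^ (n - 1) - 1)⁻¹, ?_⟩
      rw [RingHom.mem_ker, map_sub, map_mul, h1, AlgHom.commutes, map_one, Algebra.algebraMap_self,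
        RingHom.id_apply, inv_mul_cancel₀ h2, sub_self]
    · intro j hj
      refine D.aeval_eq_zero_of_good hn w hw _ ?_ z hzinj (t ^ q) hzt
      rw [← hιφ, hucoeff j hj, map_zero]

/-- Stepanov's bound for the number of tuples of distinct noncritical points on which `Y ^ n - Y` is
constant and which are permuted by Frobenius in a prescribed way. -/
theorem stepanov (D : RootData k n) [IsAlgClosed k] (p f : ℕ) [Fact p.Prime] [CharP k p] (hn : (n : k) ≠ 0) (hr : r < n)
    (τ : Fin (r + 1) → Fin (r + 1)) (hτ : Function.Injective τ) (l m M : ℕ)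
    (hlq : bd n r * (2 * l + bD n r) < 2 * p ^ f)
    (hcount : ∑ j : Fin M, boxCard n r (l + m + cst n r * j) < boxCard n r l * boxCard n r m)
    {Ξ : Type*} [Fintype Ξ] (x : Ξ → Fin (r + 1) → k) (hxinj : Function.Injective x)
    (hx : ∀ a, Function.Injective (x a)) (c : Ξ → k) (hc : ∀ a i, x a i ^ n - x a i = c a)
    (hcrit : ∀ a i, (n : k) * x a i ^ (n - 1) ≠ 1) (hfrob : ∀ a i, x a (τ i) ^ p ^ f = x a i) :
    2 * (Fintype.card Ξ * M) ≤ bd n r * (2 * (l + p ^ f * m) + bD n r) := by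
  obtain ⟨w, hw, i₁, hi₁⟩ : ∃ w : Fin (r + 1) → Fin n, Function.Injective w ∧ ∃ i₁, w i₁ = D.i₀ := by
    refine ⟨fun i => Equiv.swap (Fin.castLE (by omega : r + 1 ≤ n) 0) D.i₀ (Fin.castLE (by omega) i),
      fun i j h => ?_, 0, ?_⟩
    · exact Fin.castLE_injective _ (Equiv.injective _ h)
    · exact Equiv.swap_apply_left _ _
  let Φ : MvPolynomial (Fin (r + 1)) k →ₐ[k] k⟦X⟧ := MvPolynomial.aeval (fun i => D.y (w i))
  let I := RingHom.ker Φ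
  have hI : I.IsPrime := RingHom.ker_isPrime Φ
  refine D.stepanov_aux p f hn hr w hw i₁ hi₁ (A := MvPolynomial (Fin (r + 1)) k ⧸ I)
    (Ideal.Quotient.mkₐ k I) (Ideal.Quotient.mkₐ_surjective k I)
    (Ideal.Quotient.liftₐ I Φ fun a ha => ha) ?_ ?_ τ hτ l m M hlq hcount x hxinj
    (fun a => Ideal.Quotient.liftₐ I (MvPolynomial.aeval (x a)) fun b hb =>
      D.aeval_eq_zero_of_good hn w hw b hb (x a) (hx a) (c a) (hc a)) ?_ hcrit hfrob
  · exact Ideal.kerLiftAlg_injective Φ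
  · intro a; rfl
  · intro a b; rfl

end RootData
end Trinomial

/-! ### Choice of the parameters -/

namespace Trinomial
open scoped PowerSeries

/-- The dimension count of Stepanov's method, with the Hilbert function replaced by its linear bounds. -/
theorem params_count (d D c s q l m M : ℝ) (hd : 2 ≤ d) (hD : 0 ≤ D) (hc : 0 ≤ c)
    (hM : 0 ≤ M) (hdD : 2 * (d * D) ≤ s) (hdc : d * c + 4 * d ≤ 2 * s) (hs : 3 ≤ s)
    (hsq : s * s ≤ q) (hM1 : 2 * M ≤ s) (hl : 2 * d * l + d * D ≤ 2 * q)
    (hm : 4 * d * D + 8 * M + d * c + 4 * d < 8 * d * (m + 1)) :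
    2 * M * (l + m + 1) + c * (M * M) < (q - d * D) * (2 * (m + 1) - D) := by
  obtain ⟨P, hP⟩ : ∃ P, P = 4 * d * (2 * (m + 1) - D) := ⟨_, rfl⟩
  have hP0 : 8 * M + d * c + 4 * d < P := by rw [hP]; linarith
  have h1 : 0 < q - d * D - M := by nlinarith
  have h2 := mul_lt_mul_of_pos_left hP0 h1
  have h3 : 4 * (M * M) ≤ q := by nlinarith
  have h4 : (d * D + M) * (8 * M + d * c + 4 * d) ≤ s * (6 * s) := by
    have : 0 ≤ d * c := by positivity
    have : 0 ≤ d * D := by positivity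
    apply mul_le_mul <;> linarith
  have h5 : s * (6 * s) ≤ 4 * d * q := by nlinarith
  have h6 : d * c * (4 * (M * M)) ≤ d * c * q := mul_le_mul_of_nonneg_left h3 (by positivity)
  have h7 : 4 * M * (2 * d * l + d * D) ≤ 4 * M * (2 * q) :=
    mul_le_mul_of_nonneg_left hl (by positivity)
  have h8 : 4 * d * (2 * M * (l + m + 1) + c * (M * M)) < 4 * d * ((q - d * D) * (2 * (m + 1) - D)) := by
    have e1 : 4 * d * ((q - d * D) * (2 * (m + 1) - D)) = (q - d * D) * P := by rw [hP]; ring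
    have e2 : 4 * d * (2 * M * (l + m + 1) + c * (M * M)) =
        4 * M * (2 * d * l + d * D) + M * P + d * c * (4 * (M * M)) := by rw [hP]; ring
    rw [e1, e2]
    linarith
  exact lt_of_mul_lt_mul_left h8 (by positivity)

/-- The bound for the number `N` of points resulting from the zero count. -/
theorem params_bound (n d D c s q l m M N : ℝ) (hn : 9 ≤ n) (hd : 2 ≤ d)
    (hE : 4 * D + c + 16 ≤ 4 * n) (hs : 2 * n * d ≤ s) (hqs : q ≤ s * s + 2 * s) (hq : 0 ≤ q)
    (hM : s ≤ 2 * M + 1) (hl : 2 * d * l + d * D ≤ 2 * q)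
    (hm : 8 * d * m ≤ 4 * d * D + 8 * M + d * c + 4 * d)
    (hN : 2 * (N * M) ≤ d * (2 * (l + q * m) + D)) : N + d * s ≤ q + d * n * s := by
  by_contra! h
  have hs4 : 4 * n ≤ s := by nlinarith
  have hM0 : 0 < M := by linarith
  have h1 : q * (8 * d * m) ≤ q * (4 * d * D + 8 * M + d * c + 4 * d) :=
    mul_le_mul_of_nonneg_left hm hq
  have h2 : M * (q + d * n * s - d * s) < M * N := mul_lt_mul_of_pos_left (by linarith) hM0
  have h3 : 8 * (M * (d * (n - 1) * s)) ≤ q * (8 + 4 * d * D + d * c + 4 * d) := by linarith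
  have h4 : 8 + 4 * d * D + d * c + 4 * d ≤ d * (4 * n - 8) := by nlinarith
  have h5 : q * (8 + 4 * d * D + d * c + 4 * d) ≤ (s * s + 2 * s) * (d * (4 * n - 8)) :=
    (mul_le_mul_of_nonneg_left h4 hq).trans
      (mul_le_mul_of_nonneg_right hqs (mul_nonneg (by linarith) (by linarith)))
  have h6 : 0 < d * s := mul_pos (by linarith) (by linarith)
  have h7 : (s - 1) * ((n - 1) * (d * s)) ≤ 2 * M * ((n - 1) * (d * s)) :=
    mul_le_mul_of_nonneg_right (by linarith) (mul_nonneg (by linarith) h6.le)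
  have h8 : (d * s) * ((s - 1) * (n - 1)) ≤ (d * s) * ((s + 2) * (n - 2)) := by linarith
  have h9 := le_of_mul_le_mul_left h8 h6
  linarith

/-- The choice of the parameters in Stepanov's method: `M` is about `√q / 2`, `l` is as large as the
independence argument allows, and `m` is as small as the dimension count allows. -/
theorem exists_params (n d D c s q : ℕ) (hn : 3 ≤ n) (hd : 2 ≤ d) (hE : 4 * D + c + 16 ≤ 4 * n ^ 2)
    (hs : 2 * n ^ 2 * d ≤ s) (hsq : s * s ≤ q) (hqs : q < (s + 1) * (s + 1)) :
    ∃ l m M : ℕ, d * (2 * l + D) < 2 * q ∧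
      (∀ B : ℕ → ℕ, (∀ i, B i ≤ d * (i + 1)) → (∀ i, d * (2 * (i + 1)) ≤ 2 * B i + d * D) →
        ∑ j : Fin M, B (l + m + c * j) < B l * B m) ∧
      ∀ N : ℕ, 2 * (N * M) ≤ d * (2 * (l + q * m) + D) → N + d * s ≤ q + d * n ^ 2 * s := by
  have hn9 : 9 ≤ n ^ 2 := by nlinarith
  have hdD : 2 * (d * D) ≤ s := by nlinarith
  have hdc : d * c + 4 * d ≤ 2 * s := by nlinarith
  have hs36 : 36 ≤ s := by nlinarith
  obtain ⟨M, hM⟩ : ∃ M, M = s / 2 := ⟨_, rfl⟩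
  have hM1 : 2 * M ≤ s := by omega
  have hM2 : s ≤ 2 * M + 1 := by omega
  have hqs' : s ≤ q := by nlinarith
  obtain ⟨l, hl⟩ : ∃ l, l = (2 * q - 1 - d * D) / (2 * d) := ⟨_, rfl⟩
  have hl1 : 2 * d * l + d * D + 1 ≤ 2 * q := by
    have := Nat.mul_div_le (2 * q - 1 - d * D) (2 * d)
    rw [← hl] at this
    omega
  have hl2 : 2 * q ≤ 2 * d * (l + 1) + d * D := by
    have := Nat.lt_mul_div_succ (2 * q - 1 - d * D) (show 0 < 2 * d by omega)
    rw [← hl] at this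
    omega
  obtain ⟨m, hm⟩ : ∃ m, m = (4 * d * D + 8 * M + d * c + 4 * d) / (8 * d) := ⟨_, rfl⟩
  have hm1 : 8 * d * m ≤ 4 * d * D + 8 * M + d * c + 4 * d := by
    rw [hm]; exact Nat.mul_div_le _ _
  have hm2 : 4 * d * D + 8 * M + d * c + 4 * d < 8 * d * (m + 1) := by
    rw [hm]; exact Nat.lt_mul_div_succ _ (by omega)
  have hl1' : 2 * (d : ℝ) * l + d * D ≤ 2 * q := by
    have : 2 * d * l + d * D ≤ 2 * q := by omega
    exact_mod_cast this
  refine ⟨l, m, M, by linarith, fun B hB1 hB2 => ?_, fun N hN => ?_⟩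
  · have hsum : 2 * ∑ j : Fin M, B (l + m + c * j) ≤ 2 * d * M * (l + m + 1) + d * c * (M * M) := by
      calc 2 * ∑ j : Fin M, B (l + m + c * j) ≤ 2 * ∑ j : Fin M, d * (l + m + c * j + 1) :=
            Nat.mul_le_mul_left _ (Finset.sum_le_sum fun j _ => hB1 _)
        _ = 2 * d * M * (l + m + 1) + d * c * ((∑ j ∈ Finset.range M, j) * 2) := by
            rw [Fin.sum_univ_eq_sum_range (fun j => d * (l + m + c * j + 1)), ← Finset.mul_sum]
            rw [Finset.sum_congr rfl fun j _ => (by ring : l + m + c * j + 1 = (l + m + 1) + c * j),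
              Finset.sum_add_distrib, ← Finset.mul_sum]
            simp
            ring
        _ ≤ _ := by
            rw [Finset.sum_range_id_mul_two]
            gcongr
            omega
    have h0 := params_count d D c s q l m M (by exact_mod_cast hd) (by positivity) (by positivity)
      (by positivity) (by exact_mod_cast hdD) (by exact_mod_cast hdc)
      (by exact_mod_cast (by omega : 3 ≤ s)) (by exact_mod_cast hsq) (by exact_mod_cast hM1)
      hl1' (by exact_mod_cast hm2)
    have h1 : (d : ℝ) * (2 * (l + 1)) ≤ 2 * B l + d * D := by exact_mod_cast hB2 l
    have h2 : (d : ℝ) * (2 * (m + 1)) ≤ 2 * B m + d * D := by exact_mod_cast hB2 m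
    have hl2' : 2 * (q : ℝ) ≤ 2 * d * (l + 1) + d * D := by exact_mod_cast hl2
    have hdD' : 2 * ((d : ℝ) * D) ≤ s := by exact_mod_cast hdD
    have hqs'' : (s : ℝ) ≤ q := by exact_mod_cast hqs'
    have hd' : (0 : ℝ) < d := by exact_mod_cast (by omega : 0 < d)
    have h3' : (0 : ℝ) ≤ q - d * D := by
      have : (0 : ℝ) ≤ d * D := by positivity
      linarith
    have h5 : (q - d * D : ℝ) * (d * (2 * (m + 1) - D)) ≤ B l * (2 * B m) := by
      refine (mul_le_mul_of_nonneg_left (by linarith : _ ≤ 2 * (B m : ℝ)) h3').trans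
        (mul_le_mul_of_nonneg_right (by linarith) (by positivity))
    have hsum' : 2 * ((∑ j : Fin M, B (l + m + c * j) : ℕ) : ℝ) ≤
        2 * d * M * (l + m + 1) + d * c * (M * M) := by exact_mod_cast hsum
    have h6 := mul_lt_mul_of_pos_left h0 hd'
    have h7 : ((∑ j : Fin M, B (l + m + c * j) : ℕ) : ℝ) < B l * B m := by linarith
    exact_mod_cast h7
  · have := params_bound ((n : ℝ) ^ 2) d D c s q l m M N (by exact_mod_cast hn9) (by exact_mod_cast hd)
      (by exact_mod_cast hE) (by exact_mod_cast hs)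
      (by exact_mod_cast (by linarith : q ≤ s * s + 2 * s)) (by positivity) (by exact_mod_cast hM2)
      hl1' (by exact_mod_cast hm1) (by exact_mod_cast hN)
    exact_mod_cast this

theorem bd_succ (n r : ℕ) (hr : r + 1 ≤ n) : bd n (r + 1) = (n - (r + 1)) * bd n r := by
  rw [bd, bd, Fin.prod_univ_succ]
  congr 1
  refine Finset.prod_congr rfl fun i _ => ?_
  rw [Fin.val_succ]
  omega

theorem bd_le_factorial (n r : ℕ) (hr : r < n) : bd n r ≤ (n - 1).factorial := by
  suffices h : (n - 1 - r).factorial * bd n r ≤ (n - 1).factorial from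
    (Nat.le_mul_of_pos_left _ (Nat.factorial_pos _)).trans h
  induction r with
  | zero => simp [bd]
  | succ r ih =>
    refine le_trans (le_of_eq ?_) (ih (by omega))
    rw [bd_succ n r (by omega), ← mul_assoc]
    congr 1
    rw [(by omega : n - 1 - r = (n - 1 - (r + 1)) + 1), Nat.factorial_succ, mul_comm]
    congr 1
    omega

theorem sum_bd_le (n r : ℕ) (hr : r + 2 ≤ n) : ∑ i ∈ Finset.range (r + 1), bd n i ≤ 2 * bd n r := by
  induction r with
  | zero => simp [two_mul]
  | succ r ih =>
    rw [Finset.sum_range_succ]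
    have h1 := ih (by omega)
    have h2 : 2 * bd n r ≤ bd n (r + 1) := by
      rw [bd_succ n r (by omega)]
      exact Nat.mul_le_mul_right _ (by omega)
    omega

theorem bd_pos (n r : ℕ) (hr : r < n) : 0 < bd n r := by
  rw [bd]
  exact Finset.prod_pos fun i _ => by
    change 0 < n - r + (i : ℕ)
    omega

theorem two_le_bd (n r : ℕ) (hr1 : 1 ≤ r) (hr : r + 2 ≤ n) : 2 ≤ bd n r := by
  obtain ⟨r, rfl⟩ := Nat.exists_eq_add_of_le' hr1
  rw [bd_succ n r (by omega)]
  have := bd_pos n r (by omega)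
  nlinarith [(by omega : 2 ≤ n - (r + 1))]

theorem two_bD (n r : ℕ) (hr : r + 2 ≤ n) : 2 * bD n r + r * (r + 3) = 2 * (r * n) := by
  induction r with
  | zero => simp [bD]
  | succ r ih =>
    have h1 : bD n (r + 1) = (n - (r + 1) - 1) + bD n r := by
      rw [bD, bD, Fin.sum_univ_succ]
      congr 1
      refine Finset.sum_congr rfl fun i _ => ?_
      rw [Fin.val_succ]
      omega
    have h2 := ih (by omega)
    rw [h1]
    obtain ⟨j, rfl⟩ := Nat.exists_eq_add_of_le hr
    rw [(by omega : r + 1 + 2 + j - (r + 1) - 1 = j + 1)]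
    linarith

theorem four_bD_add_cst (n r : ℕ) (hr1 : 1 ≤ r) (hr : r + 2 ≤ n) :
    4 * bD n r + cst n r + 16 ≤ 4 * n ^ 2 := by
  have h := two_bD n r hr
  obtain ⟨j, rfl⟩ := Nat.exists_eq_add_of_le hr
  rw [cst, (by omega : r + 2 + j - 1 = r + 1 + j), (by omega : r + 2 + j - 2 = r + j)]
  nlinarith

namespace RootData
variable {k : Type*} [Field k] {n r : ℕ}

/-- Stepanov's bound with the parameters chosen: for `s = ⌊√q⌋` the number of tuples is at most
`q + bd n r * (n ^ 2 - 1) * s`. -/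
theorem card_le (D : RootData k n) [IsAlgClosed k] (p f : ℕ) [Fact p.Prime] [CharP k p]
    (hn : (n : k) ≠ 0) (hr1 : 1 ≤ r) (hr : r + 2 ≤ n) (s : ℕ)
    (hs : 2 * n ^ 2 * (n - 1).factorial ≤ s) (hsq : s * s ≤ p ^ f) (hqs : p ^ f < (s + 1) * (s + 1))
    (τ : Fin (r + 1) → Fin (r + 1)) (hτ : Function.Injective τ)
    {Ξ : Type*} [Fintype Ξ] (x : Ξ → Fin (r + 1) → k) (hxinj : Function.Injective x)
    (hx : ∀ a, Function.Injective (x a)) (c : Ξ → k) (hc : ∀ a i, x a i ^ n - x a i = c a)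
    (hcrit : ∀ a i, (n : k) * x a i ^ (n - 1) ≠ 1) (hfrob : ∀ a i, x a (τ i) ^ p ^ f = x a i) :
    Fintype.card Ξ + bd n r * s ≤ p ^ f + bd n r * n ^ 2 * s := by
  obtain ⟨l, m, M, h1, h2, h3⟩ := exists_params n (bd n r) (bD n r) (cst n r) s (p ^ f) (by omega)
    (two_le_bd n r hr1 hr) (four_bD_add_cst n r hr1 hr)
    ((Nat.mul_le_mul_left _ (bd_le_factorial n r (by omega))).trans hs) hsq hqs
  exact h3 _ (D.stepanov p f hn (by omega) τ hτ l m M h1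
    (h2 _ (fun i => boxCard_le n r i (by omega)) (fun i => le_boxCard n r i (by omega)))
    x hxinj hx c hc hcrit hfrob)

end RootData
end Trinomial

/-! ### Counting roots by degree -/

namespace Trinomial

theorem natDegree_trinomial {R : Type*} [CommRing R] [Nontrivial R] (n : ℕ) (hn : 2 ≤ n) (b : R) :
    (X ^ n - X + C b : R[X]).natDegree = n := by
  have h : (X ^ n - X + C b : R[X]) = X ^ n + (- X + C b) := by ring
  have h1 : (-X + C b : R[X]).natDegree < (X ^ n : R[X]).natDegree := by
    rw [natDegree_X_pow]
    have : (-X + C b : R[X]).natDegree ≤ 1 := by compute_degree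
    omega
  rw [h, natDegree_add_eq_left_of_natDegree_lt h1, natDegree_X_pow]

/-- An element of degree `d` over `F` is fixed by the `e`-th power of Frobenius iff `d ∣ e`. -/
theorem pow_card_pow_eq_iff {F k : Type*} [Field F] [Fintype F] [Field k] [Algebra F k]
    (y : k) (hy : IsIntegral F y) (e : ℕ) :
    y ^ Fintype.card F ^ e = y ↔ (minpoly F y).natDegree ∣ e := by
  rw [(minpoly.irreducible hy).natDegree_dvd_iff_dvd_X_pow_card_pow_sub_X, minpoly.dvd_iff,
    map_sub, map_pow, aeval_X, sub_eq_zero, Nat.card_eq_fintype_card]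

/-- For `s = ⌊√q⌋`, the number of noncritical roots of degree `r + 1` is at most
`q + bd n r * (n ^ 2 - 1) * s`: their Frobenius orbits are tuples permuted cyclically by Frobenius. -/
theorem card_degree_le {F k : Type*} [Field F] [Fintype F] [Field k] [Algebra F k] [IsAlgClosed k]
    [Algebra.IsAlgebraic F k] (n : ℕ) (hn : (n : k) ≠ 0) (hn1 : ((n - 1 : ℕ) : k) ≠ 0) (h2 : (2 : k) ≠ 0)
    (s : ℕ) (hs : 2 * n ^ 2 * (n - 1).factorial ≤ s) (hsq : s * s ≤ Fintype.card F)
    (hqs : Fintype.card F < (s + 1) * (s + 1)) (G : Finset k)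
    (hG : ∀ y ∈ G, (∃ b : F, y ^ n - y = algebraMap F k b) ∧ (n : k) * y ^ (n - 1) ≠ 1)
    (r : ℕ) (hr : r + 2 ≤ n) :
    (G.filter fun y => (minpoly F y).natDegree = r + 1).card + bd n r * s ≤
      Fintype.card F + bd n r * n ^ 2 * s := by
  classical
  rcases Nat.eq_zero_or_pos r with rfl | hr1
  · have h1 : (G.filter fun y => (minpoly F y).natDegree = 0 + 1).card ≤ Fintype.card F := by
      rw [← Finset.card_univ]
      refine (Finset.card_le_card ?_).trans (Finset.card_image_le (f := algebraMap F k))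
      intro y hy
      have h := minpoly.natDegree_eq_one_iff.1 (Finset.mem_filter.1 hy).2
      obtain ⟨b, hb⟩ := h
      exact Finset.mem_image.2 ⟨b, Finset.mem_univ _, hb⟩
    have h3 : bd n 0 * s ≤ bd n 0 * n ^ 2 * s := by
      rw [mul_right_comm]
      exact Nat.le_mul_of_pos_right _ (pow_pos (by omega) 2)
    omega
  obtain ⟨p, hp⟩ := CharP.exists F
  obtain ⟨f, hpp, hf⟩ := FiniteField.card F p
  have : Fact p.Prime := ⟨hpp⟩
  have : CharP k p := charP_of_injective_algebraMap (algebraMap F k).injective p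
  obtain ⟨N, rfl⟩ := Nat.exists_eq_add_of_le' (by omega : 2 ≤ n)
  obtain ⟨D⟩ := exists_rootData (k := k) N (by omega) hn hn1 h2
  let Ξ := {y : k // y ∈ G.filter fun y => (minpoly F y).natDegree = r + 1}
  have hdeg : ∀ y : Ξ, (minpoly F y.1).natDegree = r + 1 := fun y => (Finset.mem_filter.1 y.2).2
  have hmem : ∀ y : Ξ, y.1 ∈ G := fun y => (Finset.mem_filter.1 y.2).1
  have hInt : ∀ y : k, IsIntegral F y := fun y => Algebra.IsIntegral.isIntegral y
  let φ := FiniteField.frobeniusAlgHom F k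
  have hφ : ∀ (i : ℕ) (y : k), (φ ^ i) y = y ^ Fintype.card F ^ i := by
    intro i y
    rw [AlgHom.coe_pow, FiniteField.coe_frobeniusAlgHom, pow_iterate]
  choose c hc using fun y : Ξ => (hG y.1 (hmem y)).1
  rw [hf] at hsq hqs
  have hmain := D.card_le p f hn hr1 hr s hs hsq hqs (finRotate (r + 1)).symm (Equiv.injective _)
    (Ξ := Ξ) (fun y i => (φ ^ (i : ℕ)) y.1) ?_ ?_ (fun y => algebraMap F k (c y)) ?_ ?_ ?_
  · rw [hf]
    rw [Fintype.card_coe] at hmain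
    exact hmain
  · intro y y' h
    have := congrFun h 0
    exact Subtype.ext (by simpa only [Fin.val_zero, pow_zero, AlgHom.one_apply] using this)
  · intro y i j hij
    simp only at hij
    wlog h : i ≤ j generalizing i j
    · exact (this hij.symm (le_of_not_ge h)).symm
    obtain ⟨e, he⟩ := Nat.exists_eq_add_of_le (Fin.le_def.1 h)
    rw [he, pow_add, AlgHom.mul_apply] at hij
    have h1 := (φ ^ (i : ℕ)).injective hij
    rw [hφ, eq_comm, pow_card_pow_eq_iff _ (hInt _), hdeg] at h1
    have h3 := Nat.eq_zero_of_dvd_of_lt h1 (by omega)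
    exact Fin.ext (by omega)
  · intro y i
    rw [← map_pow, ← map_sub, hc, AlgHom.commutes]
  · intro y i h
    apply (hG y.1 (hmem y)).2
    apply (φ ^ (i : ℕ)).injective
    rw [map_mul, map_pow, map_natCast, map_one]
    exact h
  · intro y i
    obtain ⟨j, rfl⟩ := (finRotate (r + 1)).surjective i
    rw [Equiv.symm_apply_apply, ← hf]
    change φ ((φ ^ (j : ℕ)) y.1) = _
    rw [← AlgHom.mul_apply, ← pow_succ']
    rcases Nat.lt_or_ge (j : ℕ) r with h | h
    · rw [finRotate_of_lt h]
    · have hj : j = Fin.last r := Fin.ext (by simp; omega)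
      subst hj
      rw [finRotate_last, hφ, hφ, Fin.val_last, Fin.val_zero, pow_zero, pow_one,
        pow_card_pow_eq_iff _ (hInt _), hdeg]

/-- At least `q - (n - 1)` trinomials `Y ^ n - Y + b` have no critical root, and each of these has `n`
roots. -/
theorem exists_roots {F k : Type*} [Field F] [Fintype F] [Field k] [Algebra F k] [IsAlgClosed k]
    (n : ℕ) (hn2 : 2 ≤ n) :
    ∃ G : Finset k, (∀ y ∈ G, (∃ b : F, y ^ n - y = algebraMap F k b) ∧ (n : k) * y ^ (n - 1) ≠ 1) ∧
      n * Fintype.card F ≤ G.card + n * (n - 1) := by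
  classical
  let P : F → k[X] := fun b => X ^ n - X + C (algebraMap F k b)
  have hPdeg : ∀ b, (P b).natDegree = n := fun b => natDegree_trinomial n hn2 _
  have hP0 : ∀ b, P b ≠ 0 := by
    intro b h
    have := hPdeg b
    rw [h, natDegree_zero] at this
    omega
  have hroot : ∀ b y, y ∈ (P b).roots.toFinset ↔ y ^ n - y = algebraMap F k (-b) := by
    intro b y
    rw [Multiset.mem_toFinset, mem_roots (hP0 b), IsRoot.def]
    simp only [P, eval_add, eval_sub, eval_pow, eval_X, eval_C, map_neg]
    rw [add_eq_zero_iff_eq_neg]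
  let Q : k[X] := C (n : k) * X ^ (n - 1) - 1
  have hQdeg : Q.natDegree ≤ n - 1 := by
    refine (natDegree_sub_le _ _).trans ?_
    rw [natDegree_one, Nat.max_zero]
    exact natDegree_C_mul_X_pow_le _ _
  have hQ0 : Q ≠ 0 := by
    intro h
    have := congrArg (eval 0) h
    simp only [Q, eval_sub, eval_mul, eval_C, eval_pow, eval_X, eval_one, eval_zero,
      zero_pow (by omega : n - 1 ≠ 0)] at this
    simp at this
  have hQroot : ∀ y, y ∈ Q.roots.toFinset ↔ (n : k) * y ^ (n - 1) = 1 := by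
    intro y
    rw [Multiset.mem_toFinset, mem_roots hQ0, IsRoot.def]
    simp [Q, sub_eq_zero]
  let Bad : Finset F := Finset.univ.filter fun b => ∃ y ∈ Q.roots.toFinset, y ^ n - y = algebraMap F k (-b)
  have hBad : Bad.card ≤ n - 1 := by
    have h1 : Bad.image (fun b => algebraMap F k (-b)) ⊆ Q.roots.toFinset.image (fun y => y ^ n - y) := by
      intro z hz
      obtain ⟨b, hb, rfl⟩ := Finset.mem_image.1 hz
      obtain ⟨y, hy, hyb⟩ := (Finset.mem_filter.1 hb).2
      exact Finset.mem_image.2 ⟨y, hy, hyb⟩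
    have h2 := Finset.card_le_card h1
    rw [Finset.card_image_of_injective _ (f := fun b => algebraMap F k (-b))
      ((algebraMap F k).injective.comp neg_injective)] at h2
    exact h2.trans (Finset.card_image_le.trans ((Multiset.toFinset_card_le _).trans
      ((card_roots' Q).trans hQdeg)))
  have hcard : ∀ b ∈ Badᶜ, (P b).roots.toFinset.card = n := by
    intro b hb
    rw [Multiset.toFinset_card_of_nodup, ← hPdeg b, (IsAlgClosed.splits (P b)).natDegree_eq_card_roots]
    rw [Multiset.nodup_iff_count_le_one]
    intro y
    by_contra! h
    rw [count_roots, one_lt_rootMultiplicity_iff_isRoot (hP0 b)] at h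
    have h1 : (n : k) * y ^ (n - 1) = 1 := by
      have := h.2
      simpa [P, IsRoot.def, sub_eq_zero, derivative_X_pow] using this
    have h2 : y ^ n - y = algebraMap F k (-b) :=
      (hroot b y).1 (Multiset.mem_toFinset.2 ((mem_roots (hP0 b)).2 h.1))
    exact Finset.mem_compl.1 hb
      (Finset.mem_filter.2 ⟨Finset.mem_univ _, y, (hQroot y).2 h1, h2⟩)
  refine ⟨Badᶜ.biUnion fun b => (P b).roots.toFinset, ?_, ?_⟩
  · intro y hy
    obtain ⟨b, hb, hyb⟩ := Finset.mem_biUnion.1 hy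
    rw [hroot] at hyb
    refine ⟨⟨_, hyb⟩, fun h => Finset.mem_compl.1 hb ?_⟩
    exact Finset.mem_filter.2 ⟨Finset.mem_univ _, y, (hQroot y).2 h, hyb⟩
  · rw [Finset.card_biUnion, Finset.sum_congr rfl hcard, Finset.sum_const, smul_eq_mul,
      Finset.card_compl]
    · have : Fintype.card F ≤ (Fintype.card F - Bad.card) + (n - 1) := by omega
      calc n * Fintype.card F ≤ n * ((Fintype.card F - Bad.card) + (n - 1)) := Nat.mul_le_mul_left _ this
        _ = _ := by ring
    · intro b _ b' _ hbb'
      refine Finset.disjoint_left.2 ?_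
      intro y hy hy'
      rw [hroot] at hy hy'
      exact hbb' (neg_injective ((algebraMap F k).injective (hy.symm.trans hy')))

end Trinomial

theorem stmt_6 (n : ℕ) (hn : 2 ≤ n) (F : Type*) [Field F] [Fintype F]
    (hq : (2 * n * n.factorial) ^ 2 ≤ Fintype.card F)
    (hcop : Nat.Coprime (Fintype.card F) (n * (n - 1))) :
    ∃ b : F, Irreducible (X ^ n - X + C b) := by
  by_contra! hred
  have hdvd : ∀ j : ℕ, j ∣ n * (n - 1) → (j : AlgebraicClosure F) ≠ 0 := by
    intro j hj h0
    obtain ⟨p, hp⟩ := CharP.exists F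
    obtain ⟨f, hpp, hf⟩ := FiniteField.card F p
    have : CharP (AlgebraicClosure F) p :=
      charP_of_injective_algebraMap (algebraMap F (AlgebraicClosure F)).injective p
    rw [CharP.cast_eq_zero_iff _ p] at h0
    refine Nat.not_coprime_of_dvd_of_dvd hpp.one_lt ?_ (h0.trans hj) hcop
    rw [hf]
    exact dvd_pow_self p f.ne_zero
  have hn0 := hdvd n (Dvd.intro _ rfl)
  have hn1 := hdvd (n - 1) (Dvd.intro_left _ rfl)
  -- `n * (n - 1)` is even, so the characteristic is odd
  have h2 := hdvd 2 (Nat.even_mul_pred_self n).two_dvd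
  obtain ⟨G, hG, hGcard⟩ := Trinomial.exists_roots (F := F) (k := AlgebraicClosure F) n hn
  obtain ⟨s, hs⟩ : ∃ s, s = Nat.sqrt (Fintype.card F) := ⟨_, rfl⟩
  have hsq : s * s ≤ Fintype.card F := hs ▸ Nat.sqrt_le _
  have hqs : Fintype.card F < (s + 1) * (s + 1) := hs ▸ Nat.lt_succ_sqrt _
  have hs2 : 2 * n ^ 2 * (n - 1).factorial ≤ s := by
    rw [hs, Nat.le_sqrt']
    refine le_trans (le_of_eq ?_) hq
    rw [← Nat.mul_factorial_pred (by omega : n ≠ 0)]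
    ring
  have hdeg : ∀ y ∈ G, (minpoly F y).natDegree - 1 ∈ Finset.range (n - 1) := by
    intro y hy
    obtain ⟨⟨b, hb⟩, -⟩ := hG y hy
    have h := Trinomial.natDegree_trinomial n hn (-b)
    have h0 : (X ^ n - X + C (-b) : F[X]) ≠ 0 := by
      intro h0
      rw [h0, natDegree_zero] at h
      omega
    have hroot : aeval y (X ^ n - X + C (-b) : F[X]) = 0 := by
      simp [hb]
    have hInt : IsIntegral F y := Algebra.IsIntegral.isIntegral y
    have hd := minpoly.dvd F y hroot
    have hle := natDegree_le_of_dvd hd h0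
    have hpos := minpoly.natDegree_pos hInt
    rw [h] at hle
    rcases hle.lt_or_eq with hlt | heq
    · exact Finset.mem_range.2 (by omega)
    · exfalso
      apply hred (-b)
      have hass := associated_of_dvd_of_natDegree_le hd h0 (by omega)
      exact hass.irreducible (minpoly.irreducible hInt)
  have hfib := Finset.card_eq_sum_card_fiberwise hdeg
  have hN : ∀ r ∈ Finset.range (n - 1),
      (G.filter fun y => (minpoly F y).natDegree - 1 = r).card + Trinomial.bd n r * s ≤
        Fintype.card F + Trinomial.bd n r * n ^ 2 * s := by
    intro r hr
    have hr' := Finset.mem_range.1 hr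
    have h := Trinomial.card_degree_le (F := F) n hn0 hn1 h2 s hs2 hsq hqs G hG r (by omega)
    have he : (G.filter fun y => (minpoly F y).natDegree - 1 = r) =
        G.filter fun y => (minpoly F y).natDegree = r + 1 := by
      refine Finset.filter_congr fun y _ => ?_
      have hpos := minpoly.natDegree_pos (Algebra.IsIntegral.isIntegral (R := F) y)
      omega
    rw [he]
    exact h
  -- sum over the degrees and compare with the number of noncritical roots
  have hsum := Finset.sum_le_sum hN
  rw [Finset.sum_add_distrib, Finset.sum_add_distrib, ← hfib, ← Finset.sum_mul, ← Finset.sum_mul,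
    ← Finset.sum_mul, Finset.sum_const, Finset.card_range, smul_eq_mul] at hsum
  obtain ⟨N, rfl⟩ := Nat.exists_eq_add_of_le' hn
  have hS1 : ∑ r ∈ Finset.range (N + 2 - 1), Trinomial.bd (N + 2) r ≤ 2 * (N + 2 - 1).factorial :=
    (Trinomial.sum_bd_le (N + 2) N le_rfl).trans (Nat.mul_le_mul_left _ (Trinomial.bd_le_factorial _ _ (by omega)))
  have hS2 : 1 ≤ ∑ r ∈ Finset.range (N + 2 - 1), Trinomial.bd (N + 2) r :=
    (Trinomial.bd_pos (N + 2) 0 (by omega)).trans_le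
      (Finset.single_le_sum (f := Trinomial.bd (N + 2)) (fun _ _ => Nat.zero_le _) (Finset.mem_range.2 (by omega)))
  generalize ∑ r ∈ Finset.range (N + 2 - 1), Trinomial.bd (N + 2) r = S at hS1 hS2 hsum
  have hSs : S * (N + 2) ^ 2 ≤ s := by nlinarith
  have h5 : S * (N + 2) ^ 2 * s ≤ Fintype.card F := (Nat.mul_le_mul_right s hSs).trans hsq
  rw [(by omega : N + 2 - 1 = N + 1)] at hsum hGcard
  have h6 : S * s ≤ (N + 2) * (N + 1) := by nlinarith
  have h7 : s ≤ S * s := Nat.le_mul_of_pos_left _ hS2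
  have h8 : (N + 2) ^ 2 ≤ S * (N + 2) ^ 2 := Nat.le_mul_of_pos_left _ hS2
  nlinarith
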